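/- arXiv:1812.08470 — 6 statements merged into one kernel-verified Lean document; each statement's English description precedes it below -/
import Mathlib

section
/- Let 𝕊 ⊆ ℝ^ℓ (ℓ ≥ 2) be a state space. Then the following are equivalent: (i) for every n and every nonempty bounded set X ⊆ ℝⁿ whose affine span has dimension at most ℓ − 1, the set ddi(X | 𝕊) is a singleton; (ii) 𝕊 is a (hyper)-ellipsoid. -/
open MeasureTheory Metric Set

noncomputable section

/-- `Euc n` is the Euclidean space `ℝⁿ`. -/
abbrev Euc (n : ℕ) : Type := EuclideanSpace ℝ (Fin n)

/-- A state space of linear dimension `ℓ`: a compact convex set contained in (and affinely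
spanning) an affine hyperplane not through the origin, here written as `{x | f x = 1}`
for a nonzero linear functional `f`. -/
def IsStateSpace {ℓ : ℕ} (𝕊 : Set (Euc ℓ)) : Prop :=
  IsCompact 𝕊 ∧ Convex ℝ 𝕊 ∧
    ∃ f : Euc ℓ →ₗ[ℝ] ℝ, f ≠ 0 ∧
      (affineSpan ℝ 𝕊 : Set (Euc ℓ)) = {x | f x = 1}

/-- `R` is admissible for the data set `X` (w.r.t. the state space `𝕊`): it is the image of `𝕊`
under some linear map and satisfies `X ⊆ R ⊆ aff X`. -/
def Admissible {ℓ n : ℕ} (𝕊 : Set (Euc ℓ)) (X R : Set (Euc n)) : Prop :=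
  (∃ M : Euc ℓ →ₗ[ℝ] Euc n, R = M '' 𝕊) ∧ X ⊆ R ∧ R ⊆ (affineSpan ℝ X : Set (Euc n))

/-- Data-driven inference: the admissible sets for `X` of minimal `d`-dimensional Hausdorff
measure, where `d = dim aff X`. -/
def ddi {ℓ n : ℕ} (X : Set (Euc n)) (𝕊 : Set (Euc ℓ)) : Set (Set (Euc n)) :=
  {R | Admissible 𝕊 X R ∧ ∀ R' : Set (Euc n), Admissible 𝕊 X R' →
      μH[(Module.finrank ℝ (affineSpan ℝ X).direction : ℝ)] R ≤
        μH[(Module.finrank ℝ (affineSpan ℝ X).direction : ℝ)] R'}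

/-- A (hyper)-ellipsoid state space in `ℝ^ℓ`: the image of the closed unit ball of `ℝ^(ℓ-1)`
under an injective affine map. -/
def IsHyperEllipsoid {ℓ : ℕ} (𝕊 : Set (Euc ℓ)) : Prop :=
  ∃ F : Euc (ℓ - 1) →ᵃ[ℝ] Euc ℓ, Function.Injective F ∧ 𝕊 = F '' closedBall 0 1

lemma LinearMap.det_eq_prod_of_apply_basis {V ι : Type*} [AddCommGroup V] [Module ℝ V]
    [Fintype ι] (e : Module.Basis ι ℝ V)
    (D : V →ₗ[ℝ] V) (s : ι → ℝ) (h : ∀ i, D (e i) = s i • e i) :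
    LinearMap.det D = ∏ i, s i := by
  classical
  have hD : LinearMap.toMatrix e e D = Matrix.diagonal s := by
    ext i j
    rw [LinearMap.toMatrix_apply, h]
    by_cases hij : i = j
    · subst hij; simp
    · simp [Matrix.diagonal_apply_ne _ hij, Ne.symm hij]
  rw [← LinearMap.det_toMatrix e, hD, Matrix.det_diagonal]

section MaximalDeterminant

variable {V : Type*} [NormedAddCommGroup V] [InnerProductSpace ℝ V] [FiniteDimensional ℝ V]

/-- A form of the singular value decomposition for injective endomorphisms. -/
lemma exists_orthonormalBasis_apply_eq_smul_isometry (C : V →ₗ[ℝ] V)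
    (hC : Function.Injective C) :
    ∃ (e : OrthonormalBasis (Fin (Module.finrank ℝ V)) ℝ V) (W : V ≃ₗᵢ[ℝ] V)
      (s : Fin (Module.finrank ℝ V) → ℝ), (∀ i, 0 < s i) ∧ ∀ i, C (e i) = s i • W (e i) := by
  have hT : (LinearMap.adjoint C ∘ₗ C).IsSymmetric := by
    intro x y
    simp [LinearMap.adjoint_inner_left, LinearMap.adjoint_inner_right]
  set e := hT.eigenvectorBasis rfl
  have hinner : ∀ i j, i ≠ j → inner ℝ (C (e i)) (C (e j)) = 0 := by
    intro i j hij
    have h1 : (LinearMap.adjoint C ∘ₗ C) (e j) = _ := hT.apply_eigenvectorBasis rfl j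
    rw [← LinearMap.adjoint_inner_right, ← LinearMap.comp_apply, h1, inner_smul_right,
      e.orthonormal.inner_eq_zero hij, mul_zero]
  have hpos : ∀ i, 0 < ‖C (e i)‖ := by
    intro i
    rw [norm_pos_iff]
    exact (map_ne_zero_iff C hC).2 (e.orthonormal.ne_zero i)
  have hw : Orthonormal ℝ fun i => ‖C (e i)‖⁻¹ • C (e i) := by
    refine ⟨fun i => ?_, fun i j hij => ?_⟩
    · rw [norm_smul, norm_inv, norm_norm, inv_mul_cancel₀ (hpos i).ne']
    · simp only [inner_smul_left, inner_smul_right, hinner i j hij, mul_zero]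
  let w := OrthonormalBasis.mk hw
    (hw.linearIndependent.span_eq_top_of_card_eq_finrank' (by simp)).ge
  refine ⟨e, e.equiv w (Equiv.refl _), fun i => ‖C (e i)‖, hpos, fun i => ?_⟩
  rw [OrthonormalBasis.equiv_apply_basis]
  simp only [w, OrthonormalBasis.coe_mk, Equiv.refl_apply]
  rw [smul_inv_smul₀ (hpos i).ne']

lemma eq_one_of_prod_eq_one_of_prod_half_le_one {ι : Type*} [Fintype ι] (s : ι → ℝ)
    (hs : ∀ i, 0 < s i) (h1 : ∏ i, s i = 1) (h2 : ∏ i, ((1 + s i) / 2) ≤ 1) (i : ι) :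
    s i = 1 := by
  by_contra hi
  have hlt : ∏ j, s j < ∏ j, ((1 + s j) / 2) ^ 2 := by
    refine Finset.prod_lt_prod (fun j _ => hs j) (fun j _ => ?_) ⟨i, Finset.mem_univ i, ?_⟩
    · nlinarith [sq_nonneg (1 - s j)]
    · nlinarith [sq_pos_of_ne_zero (sub_ne_zero.2 (Ne.symm hi))]
  rw [h1, Finset.prod_pow] at hlt
  have h0 : 0 ≤ ∏ j, ((1 + s j) / 2) := Finset.prod_nonneg fun j _ => by linarith [hs j]
  nlinarith

lemma LinearIsometryEquiv.abs_det_eq_one (W : V ≃ₗᵢ[ℝ] V) :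
    |LinearMap.det (W.toLinearEquiv : V →ₗ[ℝ] V)| = 1 := by
  rw [← Real.norm_eq_abs, ← LinearMap.normDet_eq_norm_det]
  exact LinearIsometry.normDet_eq_one W.toLinearIsometry

/-- If the identity has maximal determinant among all affine maps sending `X` into the unit ball,
then any other such map of the same determinant defines the same unit ball. -/
lemma norm_apply_sub_eq_norm_of_det_maximal (X : Set V) (hX : ∀ x ∈ X, ‖x‖ ≤ 1)
    (hmax : ∀ (A : V →ₗ[ℝ] V) (b : V), (∀ x ∈ X, ‖A x - b‖ ≤ 1) → |LinearMap.det A| ≤ 1)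
    (C : V →ₗ[ℝ] V) (b : V) (hCX : ∀ x ∈ X, ‖C x - b‖ ≤ 1) (hC : |LinearMap.det C| = 1) (x : V) :
    ‖C x - b‖ = ‖x‖ := by
  have hdet : LinearMap.det C ≠ 0 := by
    intro h; simp [h] at hC
  have hinj : Function.Injective C :=
    (LinearEquiv.ofIsUnitDet (f := C) (v := Module.finBasis ℝ V) (v' := Module.finBasis ℝ V)
      (by simpa [LinearMap.det_toMatrix] using hdet)).injective
  obtain ⟨e, W, s, hs, hCe⟩ := exists_orthonormalBasis_apply_eq_smul_isometry C hinj
  have key : ∀ (D : V →ₗ[ℝ] V) (t : Fin (Module.finrank ℝ V) → ℝ),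
      (∀ i, D (e i) = t i • W (e i)) → |LinearMap.det D| = |∏ i, t i| := by
    intro D t hD
    rw [← LinearMap.det_eq_prod_of_apply_basis e.toBasis
      ((W.symm.toLinearEquiv : V →ₗ[ℝ] V) ∘ₗ D) t (fun i => by simp [hD]),
      LinearMap.det_comp, abs_mul, LinearIsometryEquiv.abs_det_eq_one, one_mul]
  have hs1 : ∏ i, s i = 1 := by
    rw [← abs_of_nonneg (Finset.prod_nonneg fun i _ => (hs i).le), ← key C s hCe, hC]
  have hs2 : ∏ i, ((1 + s i) / 2) ≤ 1 := by
    refine (le_abs_self _).trans ?_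
    rw [← key ((1 / 2 : ℝ) • ((W.toLinearEquiv : V →ₗ[ℝ] V) + C)) _ fun i => ?_]
    · refine hmax _ ((1 / 2 : ℝ) • b) fun y hy => ?_
      have : ((1 / 2 : ℝ) • ((W.toLinearEquiv : V →ₗ[ℝ] V) + C)) y - (1 / 2 : ℝ) • b
          = (1 / 2 : ℝ) • (W y + (C y - b)) := by
        simp [smul_sub]; abel
      rw [this, norm_smul]
      have h1 := norm_add_le (W y) (C y - b)
      rw [W.norm_map] at h1
      have := hX y hy
      have := hCX y hy
      norm_num
      linarith
    · simp only [LinearMap.smul_apply, LinearMap.add_apply, hCe]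
      simp only [LinearEquiv.coe_coe, LinearIsometryEquiv.coe_toLinearEquiv]
      module
  have hs3 := eq_one_of_prod_eq_one_of_prod_half_le_one s hs hs1 hs2
  have hCW : ∀ y, C y = W y := by
    have : C = (W.toLinearEquiv : V →ₗ[ℝ] V) :=
      e.toBasis.ext fun i => by simp [hCe, hs3]
    intro y; rw [this]; rfl
  suffices hb : b = 0 by rw [hb, hCW, sub_zero, W.norm_map]
  by_contra hb
  have : Nontrivial V := ⟨b, 0, hb⟩
  set δ := ‖b‖ ^ 2 / 4 with hδ
  have hδ0 : 0 < δ := by positivity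
  have hle := hmax (Real.sqrt (1 + δ) • (W.toLinearEquiv : V →ₗ[ℝ] V))
    (Real.sqrt (1 + δ) • (1 / 2 : ℝ) • b) fun y hy => by
      have h1 : ‖W y‖ ≤ 1 := by rw [W.norm_map]; exact hX y hy
      have h2 : ‖W y - b‖ ≤ 1 := by rw [← hCW]; exact hCX y hy
      have h3 := parallelogram_law_with_norm ℝ (W y) (W y - b)
      have h4 : W y + (W y - b) = (2 : ℝ) • (W y - (1 / 2 : ℝ) • b) := by module
      rw [h4, norm_smul, sub_sub_cancel] at h3
      simp only [Real.norm_ofNat] at h3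
      have h5 : (Real.sqrt (1 + δ) • (W.toLinearEquiv : V →ₗ[ℝ] V)) y
          - Real.sqrt (1 + δ) • (1 / 2 : ℝ) • b
          = Real.sqrt (1 + δ) • (W y - (1 / 2 : ℝ) • b) := by
        rw [smul_sub]; rfl
      rw [h5, norm_smul, Real.norm_of_nonneg (Real.sqrt_nonneg _)]
      have h6 : ‖W y - (1 / 2 : ℝ) • b‖ ^ 2 ≤ 1 - δ := by
        nlinarith [norm_nonneg (W y), norm_nonneg (W y - b)]
      refine abs_le_one_iff_mul_self_le_one.2 ?_ |> (le_abs_self _).trans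
      have h7 := Real.mul_self_sqrt (show 0 ≤ 1 + δ by linarith)
      calc _ = (1 + δ) * ‖W y - (1 / 2 : ℝ) • b‖ ^ 2 := by rw [mul_mul_mul_comm, h7]; ring
        _ ≤ (1 + δ) * (1 - δ) := by gcongr
        _ ≤ 1 := by nlinarith
  rw [LinearMap.det_smul, abs_mul, LinearIsometryEquiv.abs_det_eq_one, mul_one, abs_pow,
    abs_of_nonneg (Real.sqrt_nonneg _)] at hle
  exact hle.not_gt (one_lt_pow₀ (by rw [Real.lt_sqrt] <;> linarith) Module.finrank_pos.ne')

/-- The affine maps sending a bounded affinely spanning set into the unit ball attain a maximal,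
positive, absolute determinant. -/
lemma exists_det_maximal (X : Set V) (hX : Bornology.IsBounded X)
    (hspan : affineSpan ℝ X = ⊤) :
    ∃ (A : V →ₗ[ℝ] V) (b : V), LinearMap.det A ≠ 0 ∧ (∀ x ∈ X, ‖A x - b‖ ≤ 1) ∧
      ∀ (A' : V →ₗ[ℝ] V) (b' : V), (∀ x ∈ X, ‖A' x - b'‖ ≤ 1) →
        |LinearMap.det A'| ≤ |LinearMap.det A| := by
  have hne : X.Nonempty := by
    rw [← affineSpan_nonempty ℝ, hspan]; exact ⟨0, trivial⟩
  obtain ⟨p, hp⟩ := hne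
  have hs : Submodule.span ℝ ((fun x => x - p) '' X) = ⊤ := by
    have := vectorSpan_eq_span_vsub_set_right ℝ hp
    simp only [vsub_eq_sub] at this
    rw [← this, ← direction_affineSpan, hspan, AffineSubspace.direction_top]
  obtain ⟨n, v, hv⟩ : ∃ (n : ℕ) (v : Module.Basis (Fin n) ℝ V), ∀ i, ∃ x ∈ X, x - p = v i := by
    let v := Module.Basis.ofSpan hs.ge
    have : Finite _ := Module.Finite.finite_basis v
    obtain ⟨n, ⟨e⟩⟩ := Finite.exists_equiv_fin
      ((linearIndepOn_empty ℝ id).extend (empty_subset ((fun x => x - p) '' X)))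
    exact ⟨n, v.reindex e, fun i => by
      simpa [v] using Module.Basis.ofSpan_subset hs.ge ⟨e.symm i, rfl⟩⟩
  let Φ : (Fin n → V) →ₗ[ℝ] (V →L[ℝ] V) :=
    (LinearMap.toContinuousLinearMap : (V →ₗ[ℝ] V) ≃ₗ[ℝ] (V →L[ℝ] V)).toLinearMap ∘ₗ
      (v.constr ℝ).toLinearMap
  have hΦ : Continuous Φ := Φ.continuous_of_finiteDimensional
  have hΦv : ∀ f i, Φ f (v i) = f i := fun f i => by simp [Φ]
  have hΦsurj : ∀ A : V →ₗ[ℝ] V, (Φ fun i => A (v i) : V →ₗ[ℝ] V) = A := fun A =>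
    v.ext fun i => hΦv _ i
  let K : Set ((Fin n → V) × V) := {q | ∀ x ∈ X, ‖Φ q.1 (x - p) + q.2‖ ≤ 1}
  have hmem : ∀ (A : V →ₗ[ℝ] V) (b : V), (∀ x ∈ X, ‖A x - b‖ ≤ 1) →
      ((fun i => A (v i)), A p - b) ∈ K := by
    intro A b hA x hx
    have : Φ (fun i => A (v i)) (x - p) = A (x - p) := LinearMap.congr_fun (hΦsurj A) (x - p)
    rw [this, map_sub, sub_add_sub_cancel]
    exact hA x hx
  have hKclosed : IsClosed K := by
    simp only [K, ofPred_forall]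
    refine isClosed_biInter fun x _ => isClosed_le ?_ continuous_const
    have : Continuous fun q : (Fin n → V) × V => Φ q.1 := hΦ.comp continuous_fst
    fun_prop
  have hKbdd : K ⊆ closedBall 0 2 := by
    rintro ⟨f, u⟩ hq
    have hu : ‖u‖ ≤ 1 := by simpa using hq p hp
    rw [mem_closedBall_zero_iff, Prod.norm_mk, max_le_iff, pi_norm_le_iff_of_nonneg zero_le_two]
    refine ⟨fun i => ?_, by linarith⟩
    obtain ⟨x, hx, hxi⟩ := hv i
    have h1 := hq x hx
    simp only [hxi, hΦv] at h1
    have h2 := norm_sub_le (f i + u) u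
    rw [add_sub_cancel_right] at h2
    linarith
  have hKcompact : IsCompact K := (isCompact_closedBall _ _).of_isClosed_subset hKclosed hKbdd
  obtain ⟨ε, hε, hεX⟩ : ∃ ε : ℝ, 0 < ε ∧ ∀ x ∈ X, ‖(ε • LinearMap.id : V →ₗ[ℝ] V) x - 0‖ ≤ 1 := by
    obtain ⟨r, hr, hrX⟩ := hX.exists_pos_norm_le
    refine ⟨r⁻¹, inv_pos.2 hr, fun x hx => ?_⟩
    simp only [LinearMap.smul_apply, LinearMap.id_apply, sub_zero, norm_smul, norm_inv,
      Real.norm_of_nonneg hr.le]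
    exact inv_mul_le_one_of_le₀ (hrX x hx) hr.le
  have hdetcont : Continuous fun q : (Fin n → V) × V => |(Φ q.1).det| :=
    (ContinuousLinearMap.continuous_det.comp (hΦ.comp continuous_fst)).abs
  obtain ⟨q, hqK, hq⟩ := hKcompact.exists_isMaxOn ⟨_, hmem _ _ hεX⟩ hdetcont.continuousOn
  have hmax : ∀ (A' : V →ₗ[ℝ] V) (b' : V), (∀ x ∈ X, ‖A' x - b'‖ ≤ 1) →
      |LinearMap.det A'| ≤ |LinearMap.det (Φ q.1 : V →ₗ[ℝ] V)| := by
    intro A' b' h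
    have := hq (hmem A' b' h)
    simp only [mem_ofPred_eq, ContinuousLinearMap.det, hΦsurj] at this
    exact this
  refine ⟨Φ q.1, Φ q.1 p - q.2, ?_, fun x hx => ?_, hmax⟩
  · rw [← abs_pos]
    refine lt_of_lt_of_le ?_ (hmax _ _ hεX)
    rw [LinearMap.det_smul, LinearMap.det_id, mul_one]
    positivity
  · have h1 := hqK x hx
    rw [map_sub, sub_add] at h1
    exact h1

end MaximalDeterminant

section BallImages

variable {U V : Type*} [NormedAddCommGroup U] [InnerProductSpace ℝ U] [FiniteDimensional ℝ U]
  [NormedAddCommGroup V] [InnerProductSpace ℝ V] [FiniteDimensional ℝ V]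

/-- A surjective affine image of a unit ball is a full-dimensional ellipsoid. -/
lemma exists_image_closedBall_eq (G : U →ᵃ[ℝ] V) (hG : Function.Surjective G.linear) :
    ∃ (A : V →ₗ[ℝ] V) (b : V), LinearMap.det A ≠ 0 ∧
      G '' closedBall 0 1 = {y | ‖A y - b‖ ≤ 1} := by
  set N := LinearMap.ker G.linear
  let B₀ : Nᗮ →ₗ[ℝ] V := G.linear ∘ₗ Nᗮ.subtype
  have hproj : ∀ x : U, G.linear (Nᗮ.starProjection x) = G.linear x := by
    intro x
    have h1 : x - Nᗮ.starProjection x ∈ N := by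
      have := Nᗮ.sub_starProjection_mem_orthogonal x
      rwa [Submodule.orthogonal_orthogonal] at this
    have h2 : G.linear (x - Nᗮ.starProjection x) = 0 := h1
    rw [map_sub, sub_eq_zero] at h2
    exact h2.symm
  have hinj : Function.Injective B₀ := by
    rw [← LinearMap.ker_eq_bot, LinearMap.ker_eq_bot']
    intro x hx
    have h1 : (x : U) ∈ N ⊓ Nᗮ := ⟨hx, x.2⟩
    rw [Submodule.inf_orthogonal_eq_bot] at h1
    exact Subtype.ext h1
  have hsurj : Function.Surjective B₀ := by
    intro y
    obtain ⟨x, rfl⟩ := hG y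
    exact ⟨⟨Nᗮ.starProjection x, Nᗮ.starProjection_apply_mem x⟩, hproj x⟩
  let B : Nᗮ ≃ₗ[ℝ] V := LinearEquiv.ofBijective B₀ ⟨hinj, hsurj⟩
  have hB : ∀ z : Nᗮ, B z = G.linear z := fun z => rfl
  let e : Nᗮ ≃ₗᵢ[ℝ] V := (stdOrthonormalBasis ℝ Nᗮ).equiv (stdOrthonormalBasis ℝ V)
    (finCongr B.finrank_eq)
  let A : V ≃ₗ[ℝ] V := B.symm.trans e.toLinearEquiv
  refine ⟨A, A (G 0), A.isUnit_det'.ne_zero, ?_⟩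
  have hGx : ∀ x, G x = G.linear x + G 0 := fun x => congrFun G.decomp x
  have hA : ∀ y, ‖(A : V →ₗ[ℝ] V) y - A (G 0)‖ = ‖B.symm (y - G 0)‖ := by
    intro y
    rw [LinearEquiv.coe_coe, ← map_sub]
    exact e.norm_map _
  ext y
  rw [mem_ofPred_eq, hA]
  constructor
  · rintro ⟨x, hx, rfl⟩
    rw [mem_closedBall_zero_iff] at hx
    have h1 : G x - G 0 = B ⟨Nᗮ.starProjection x, Nᗮ.starProjection_apply_mem x⟩ := by
      rw [hB, hproj, hGx x, add_sub_cancel_right]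
    rw [h1, LinearEquiv.symm_apply_apply]
    exact (Nᗮ.norm_starProjection_apply_le x).trans hx
  · intro h
    refine ⟨B.symm (y - G 0), by simpa using h, ?_⟩
    rw [hGx, ← hB, LinearEquiv.apply_symm_apply, sub_add_cancel]

/-- A full-dimensional ellipsoid is an affine image of any unit ball of at least its dimension. -/
lemma exists_affineMap_image_closedBall (h : Module.finrank ℝ V ≤ Module.finrank ℝ U)
    (A : V →ₗ[ℝ] V) (b : V) (hA : LinearMap.det A ≠ 0) :
    ∃ G : U →ᵃ[ℝ] V, G '' closedBall 0 1 = {y | ‖A y - b‖ ≤ 1} := by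
  let A' : V ≃ₗ[ℝ] V := LinearMap.equivOfDetNeZero A hA
  have hA' : ∀ y, A' y = A y := fun y => rfl
  obtain ⟨N, hN⟩ : ∃ N : Submodule ℝ U, Module.finrank ℝ N = Module.finrank ℝ V := by
    obtain ⟨f, hf⟩ := (finrank_le_iff_exists_linearMap (R := ℝ) (M := V) (M' := U)).1 h
    exact ⟨LinearMap.range f, LinearMap.finrank_range_of_inj hf⟩
  let e : N ≃ₗᵢ[ℝ] V := (stdOrthonormalBasis ℝ N).equiv (stdOrthonormalBasis ℝ V) (finCongr hN)
  let L : U →ₗ[ℝ] V := A'.symm.toLinearMap ∘ₗ e.toLinearEquiv.toLinearMap ∘ₗ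
    N.orthogonalProjectionOnto.toLinearMap
  have hL : ∀ x, L x = A'.symm (e (N.orthogonalProjectionOnto x)) := fun x => rfl
  refine ⟨L.toAffineMap + AffineMap.const ℝ U (A'.symm b), ?_⟩
  ext y
  simp only [AffineMap.coe_add, mem_image, mem_closedBall_zero_iff, Pi.add_apply,
    LinearMap.coe_toAffineMap, AffineMap.const_apply, mem_ofPred_eq]
  constructor
  · rintro ⟨x, hx, rfl⟩
    rw [hL, ← map_add, ← hA', LinearEquiv.apply_symm_apply, add_sub_cancel_right, e.norm_map]
    exact (N.norm_orthogonalProjectionOnto_apply_le x).trans hx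
  · intro hy
    refine ⟨e.symm (A y - b), by rwa [← Submodule.coe_norm, e.symm.norm_map], ?_⟩
    rw [hL, ← map_add, Submodule.orthogonalProjectionOnto_mem_subspace_eq_self,
      LinearIsometryEquiv.apply_symm_apply, sub_add_cancel, ← hA', LinearEquiv.symm_apply_apply]

end BallImages

/-- Affine maps extend along an injective affine map whose range lies in the hyperplane
`f = 1` to linear maps. -/
lemma exists_linearMap_comp_eq {U E W : Type*} [AddCommGroup U] [Module ℝ U] [AddCommGroup E]
    [Module ℝ E] [AddCommGroup W] [Module ℝ W] (f : E →ₗ[ℝ] ℝ) (F : U →ᵃ[ℝ] E) (hF : Function.Injective F)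
    (hfF : ∀ x, f (F x) = 1) (G : U →ᵃ[ℝ] W) : ∃ M : E →ₗ[ℝ] W, ∀ x, M (F x) = G x := by
  have hlin : ∀ v, f (F.linear v) = 0 := by
    intro v
    have h1 := congrFun F.decomp v
    simp only [Pi.add_apply] at h1
    have h2 := hfF v
    rw [h1, map_add, hfF] at h2
    linarith
  let P : U × ℝ →ₗ[ℝ] E := F.linear.coprod (LinearMap.toSpanSingleton ℝ E (F 0))
  let Q : U × ℝ →ₗ[ℝ] W := G.linear.coprod (LinearMap.toSpanSingleton ℝ W (G 0))
  have hP : LinearMap.ker P = ⊥ := by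
    rw [LinearMap.ker_eq_bot']
    rintro ⟨v, t⟩ h
    simp only [P, LinearMap.coprod_apply, LinearMap.toSpanSingleton_apply] at h
    have ht : t = 0 := by
      have := congrArg f h
      simpa [hlin, hfF] using this
    subst ht
    rw [zero_smul, add_zero] at h
    have hv : v = 0 := (F.linear_injective_iff.2 hF) (h.trans (map_zero _).symm)
    rw [hv]; rfl
  obtain ⟨r, hr⟩ := P.exists_leftInverse_of_injective hP
  refine ⟨Q ∘ₗ r, fun x => ?_⟩
  have h1 : F x = P (x, 1) := by
    simpa [P] using congrFun F.decomp x
  have h2 : r (P (x, 1)) = (x, 1) := LinearMap.congr_fun hr (x, 1)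
  rw [LinearMap.comp_apply, h1, h2]
  simpa [Q] using (congrFun G.decomp x).symm

lemma affineSpan_closedBall_zero_one {V : Type*} [NormedAddCommGroup V] [NormedSpace ℝ V] :
    affineSpan ℝ (closedBall (0 : V) 1) = ⊤ := by
  refine affineSpan_eq_top_of_nonempty_interior ⟨0, ?_⟩
  rw [(convex_closedBall (0 : V) 1).convexHull_eq]
  exact ball_subset_interior_closedBall (mem_ball_self one_pos)

section Lowner

variable {V : Type*} [NormedAddCommGroup V] [InnerProductSpace ℝ V] [FiniteDimensional ℝ V]

/-- For an ellipsoidal state space, the admissible sets are the ellipsoids of `aff X`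
containing `X`. -/
lemma admissible_iff_exists_ellipsoid {ℓ n : ℕ} (F : Euc (ℓ - 1) →ᵃ[ℝ] Euc ℓ)
    (hF : Function.Injective F) (f : Euc ℓ →ₗ[ℝ] ℝ) (hfF : ∀ x, f (F x) = 1) (X : Set (Euc n))
    (ι : V →ᵃⁱ[ℝ] Euc n) (hι : range ι = affineSpan ℝ X) (hspan : affineSpan ℝ (ι ⁻¹' X) = ⊤)
    (hd : Module.finrank ℝ V ≤ ℓ - 1) (R : Set (Euc n)) :
    Admissible (F '' closedBall 0 1) X R ↔ ∃ (A : V →ₗ[ℝ] V) (b : V), LinearMap.det A ≠ 0 ∧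
      (∀ x ∈ ι ⁻¹' X, ‖A x - b‖ ≤ 1) ∧ R = ι '' {y | ‖A y - b‖ ≤ 1} := by
  constructor
  · rintro ⟨⟨M, rfl⟩, hX, hR⟩
    obtain ⟨r, hr⟩ := ι.linearIsometry.toLinearMap.exists_leftInverse_of_injective
      (LinearMap.ker_eq_bot.2 ι.linearIsometry.injective)
    let ρ : Euc n →ᵃ[ℝ] V := r.toAffineMap - AffineMap.const ℝ _ (r (ι 0))
    have hρ : ∀ v, ρ (ι v) = v := by
      intro v
      have h1 : ι v - ι 0 = ι.linearIsometry v := by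
        simpa using (ι.map_vsub v 0).symm
      calc ρ (ι v) = r (ι v) - r (ι 0) := rfl
        _ = r (ι.linearIsometry v) := by rw [← map_sub, h1]
        _ = v := LinearMap.congr_fun hr v
    let G : Euc (ℓ - 1) →ᵃ[ℝ] V := ρ.comp (M.toAffineMap.comp F)
    have hG : ∀ x, G x = ρ (M (F x)) := fun x => rfl
    have hιG : ∀ x ∈ closedBall (0 : Euc (ℓ - 1)) 1, ι (G x) = M (F x) := by
      intro x hx
      obtain ⟨v, hv⟩ : M (F x) ∈ range ι := hι ▸ hR ⟨F x, ⟨x, hx, rfl⟩, rfl⟩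
      rw [hG, ← hv, hρ]
    have hsurj : Function.Surjective G.linear := by
      rw [AffineMap.linear_surjective_iff, ← range_eq_univ, ← univ_subset_iff]
      have h1 : ι ⁻¹' X ⊆ ((⊤ : AffineSubspace ℝ (Euc (ℓ - 1))).map G : Set V) := by
        intro v hv
        obtain ⟨_, ⟨x, _, rfl⟩, hx⟩ := hX hv
        exact ⟨x, trivial, by rw [hG, hx, hρ]⟩
      have h2 := affineSpan_le.2 h1
      rw [hspan] at h2
      intro v _
      obtain ⟨x, _, hx⟩ := h2 (AffineSubspace.mem_top ℝ V v)
      exact ⟨x, hx⟩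
    obtain ⟨A, b, hA, hAb⟩ := exists_image_closedBall_eq G hsurj
    have hMR : M '' (F '' closedBall 0 1) = ι '' {y | ‖A y - b‖ ≤ 1} := by
      rw [← hAb, image_image, image_image]
      exact image_congr fun x hx => (hιG x hx).symm
    refine ⟨A, b, hA, fun x hx => ?_, hMR⟩
    obtain ⟨y, hy, hyx⟩ := hMR ▸ hX hx
    rwa [ι.injective hyx] at hy
  · rintro ⟨A, b, hA, hX, rfl⟩
    obtain ⟨G, hG⟩ := exists_affineMap_image_closedBall (U := Euc (ℓ - 1)) (by simpa using hd) A b hA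
    obtain ⟨M, hM⟩ := exists_linearMap_comp_eq f F hF hfF (ι.toAffineMap.comp G)
    refine ⟨⟨M, ?_⟩, fun x hx => ?_, ?_⟩
    · rw [← hG, image_image, image_image]
      exact image_congr fun x _ => (hM x).symm
    · obtain ⟨v, rfl⟩ : x ∈ range ι := hι ▸ subset_affineSpan ℝ X hx
      exact ⟨v, hX v hx, rfl⟩
    · rw [← hι]
      exact image_subset_range _ _

lemma hausdorffMeasure_image_ellipsoid [MeasurableSpace V] [BorelSpace V] {n : ℕ}
    (ι : V →ᵃⁱ[ℝ] Euc n) (A : V →ₗ[ℝ] V) (b : V) (hA : LinearMap.det A ≠ 0) :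
    μH[Module.finrank ℝ V] (ι '' {y | ‖A y - b‖ ≤ 1}) =
      ENNReal.ofReal |(LinearMap.det A)⁻¹| * μH[Module.finrank ℝ V] (closedBall (0 : V) 1) := by
  have hpre : {y | ‖A y - b‖ ≤ 1} = A ⁻¹' closedBall b 1 := by
    ext y; simp [dist_eq_norm]
  rw [ι.isometry.hausdorffMeasure_image (Or.inl (Nat.cast_nonneg _)), hpre,
    Measure.addHaar_preimage_linearMap _ hA, Measure.addHaar_closedBall_center]

/-- Over an ellipsoidal state space, the data-driven inference is the unique minimal volume
ellipsoid containing the data. -/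
lemma exists_ddi_eq_singleton_of_affineIsometry {ℓ n : ℕ} (F : Euc (ℓ - 1) →ᵃ[ℝ] Euc ℓ)
    (hF : Function.Injective F) (f : Euc ℓ →ₗ[ℝ] ℝ) (hfF : ∀ x, f (F x) = 1) (X : Set (Euc n))
    (hX : Bornology.IsBounded X) [MeasurableSpace V] [BorelSpace V]
    (ι : V →ᵃⁱ[ℝ] Euc n) (hι : range ι = affineSpan ℝ X) (hspan : affineSpan ℝ (ι ⁻¹' X) = ⊤)
    (hdim : Module.finrank ℝ (affineSpan ℝ X).direction = Module.finrank ℝ V)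
    (hd : Module.finrank ℝ V ≤ ℓ - 1) :
    ∃ Y : Set (Euc n), ddi X (F '' closedBall 0 1) = {Y} := by
  have hadm := admissible_iff_exists_ellipsoid F hF f hfF X ι hι hspan hd
  have hX' : Bornology.IsBounded (ι ⁻¹' X) := ι.isometry.antilipschitz.isBounded_preimage hX
  obtain ⟨A₀, b₀, hA₀, hA₀X, hmax⟩ := exists_det_maximal (ι ⁻¹' X) hX' hspan
  have hc0 : μH[Module.finrank ℝ V] (closedBall (0 : V) 1) ≠ 0 :=
    (measure_closedBall_pos _ _ one_pos).ne'
  have hctop : μH[Module.finrank ℝ V] (closedBall (0 : V) 1) ≠ ⊤ :=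
    measure_closedBall_lt_top.ne
  have hle : ∀ (A A' : V →ₗ[ℝ] V) (b b' : V), LinearMap.det A ≠ 0 → LinearMap.det A' ≠ 0 →
      (μH[Module.finrank ℝ V] (ι '' {y | ‖A y - b‖ ≤ 1}) ≤
        μH[Module.finrank ℝ V] (ι '' {y | ‖A' y - b'‖ ≤ 1}) ↔
        |LinearMap.det A'| ≤ |LinearMap.det A|) := by
    intro A A' b b' hA hA'
    rw [hausdorffMeasure_image_ellipsoid ι A b hA, hausdorffMeasure_image_ellipsoid ι A' b' hA',
      ENNReal.mul_le_mul_iff_left hc0 hctop, ENNReal.ofReal_le_ofReal_iff (abs_nonneg _),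
      abs_inv, abs_inv, inv_le_inv₀ (abs_pos.2 hA) (abs_pos.2 hA')]
  refine ⟨ι '' {y | ‖A₀ y - b₀‖ ≤ 1}, Subset.antisymm ?_ ?_⟩
  · rintro R ⟨hR, hRmin⟩
    obtain ⟨A, b, hA, hAX, rfl⟩ := (hadm _).1 hR
    have h1 := hRmin _ ((hadm _).2 ⟨A₀, b₀, hA₀, hA₀X, rfl⟩)
    rw [hdim, hle A A₀ b b₀ hA hA₀] at h1
    have hdet : |LinearMap.det A| = |LinearMap.det A₀| := le_antisymm (hmax A b hAX) h1
    let e : V ≃ₗ[ℝ] V := LinearMap.equivOfDetNeZero A₀ hA₀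
    have he : ∀ x, e.symm (A₀ x) = x := e.symm_apply_apply
    have hdete : ∀ B : V →ₗ[ℝ] V,
        |LinearMap.det (B ∘ₗ (e.symm : V →ₗ[ℝ] V))| * |LinearMap.det A₀| = |LinearMap.det B| := by
      intro B
      rw [← abs_mul, ← LinearMap.det_comp]
      congr 2
      ext x
      simp [he]
    have hA₀pos := abs_pos.2 hA₀
    have hshift : ∀ (B : V →ₗ[ℝ] V) (c x : V),
        (B ∘ₗ (e.symm : V →ₗ[ℝ] V)) (A₀ x - b₀) - c = B x - (c + B (e.symm b₀)) := by
      intro B c x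
      simp only [LinearMap.comp_apply, LinearEquiv.coe_coe, map_sub, he]
      abel
    have hnorm := norm_apply_sub_eq_norm_of_det_maximal ((fun x => A₀ x - b₀) '' (ι ⁻¹' X))
      (by rintro _ ⟨x, hx, rfl⟩; exact hA₀X x hx)
      (by
        intro B c hB
        have h2 := hmax (B ∘ₗ A₀) (c + B b₀) fun x hx => by
          have := hB _ ⟨x, hx, rfl⟩
          rwa [map_sub, sub_sub, add_comm] at this
        rw [LinearMap.det_comp, abs_mul] at h2
        exact (mul_le_iff_le_one_left hA₀pos).1 h2)
      (A ∘ₗ (e.symm : V →ₗ[ℝ] V)) (b - A (e.symm b₀))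
      (by
        rintro _ ⟨x, hx, rfl⟩
        rw [hshift, sub_add_cancel]
        exact hAX x hx)
      (by
        have h2 := hdete A
        rw [hdet] at h2
        exact (mul_eq_right₀ hA₀pos.ne').1 h2)
    have hEq : ∀ x, ‖A x - b‖ = ‖A₀ x - b₀‖ := by
      intro x
      have h2 := hnorm (A₀ x - b₀)
      rwa [hshift, sub_add_cancel] at h2
    simp only [mem_singleton_iff, hEq]
  · rintro _ rfl
    refine ⟨(hadm _).2 ⟨A₀, b₀, hA₀, hA₀X, rfl⟩, fun R' hR' => ?_⟩
    obtain ⟨A, b, hA, hAX, rfl⟩ := (hadm _).1 hR'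
    rw [hdim, hle A₀ A b₀ b hA₀ hA]
    exact hmax A b hAX

end Lowner

lemma exists_ddi_eq_singleton_of_isHyperEllipsoid {ℓ n : ℕ} {𝕊 : Set (Euc ℓ)}
    (hS : IsStateSpace 𝕊) (hE : IsHyperEllipsoid 𝕊) (X : Set (Euc n)) (hne : X.Nonempty)
    (hX : Bornology.IsBounded X) (hd : Module.finrank ℝ (affineSpan ℝ X).direction ≤ ℓ - 1) :
    ∃ Y : Set (Euc n), ddi X 𝕊 = {Y} := by
  obtain ⟨-, -, f, -, hf⟩ := hS
  obtain ⟨F, hF, rfl⟩ := hE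
  have hfF : ∀ x, f (F x) = 1 := by
    intro x
    have h1 : F x ∈ affineSpan ℝ (F '' closedBall 0 1) := by
      rw [← AffineSubspace.map_span, affineSpan_closedBall_zero_one]
      exact ⟨x, trivial, rfl⟩
    have h2 : F x ∈ {x | f x = 1} := hf ▸ h1
    exact h2
  obtain ⟨p, hp⟩ := hne
  have hpX := subset_affineSpan ℝ X hp
  let W := (affineSpan ℝ X).direction
  let ι : W →ᵃⁱ[ℝ] Euc n :=
    (AffineIsometryEquiv.vaddConst ℝ p).toAffineIsometry.comp W.subtypeₗᵢ.toAffineIsometry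
  have hιapp : ∀ w : W, ι w = (w : Euc n) + p := fun w => rfl
  have hι : range ι = affineSpan ℝ X := by
    ext y
    constructor
    · rintro ⟨w, rfl⟩
      exact AffineSubspace.vadd_mem_of_mem_direction w.2 hpX
    · intro hy
      exact ⟨⟨y - p, AffineSubspace.vsub_mem_direction hy hpX⟩, by rw [hιapp]; simp⟩
  have himage : ι '' (ι ⁻¹' X) = X :=
    image_preimage_eq_of_subset (hι ▸ subset_affineSpan ℝ X)
  refine exists_ddi_eq_singleton_of_affineIsometry F hF f hfF X hX ι hι ?_ rfl hd
  refine eq_top_iff.2 fun w _ => ?_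
  have h1 : ι w ∈ (affineSpan ℝ (ι ⁻¹' X)).map ι.toAffineMap := by
    rw [AffineSubspace.map_span, AffineIsometry.coe_toAffineMap, himage, ← SetLike.mem_coe, ← hι]
    exact mem_range_self w
  obtain ⟨v, hv, hvw⟩ := h1
  rwa [← ι.injective hvw]

/-- A nonempty compact convex set invariant under all linear isometries is a ball. -/
lemma exists_eq_closedBall_of_isometry_invariant {V : Type*} [NormedAddCommGroup V]
    [InnerProductSpace ℝ V] [Nontrivial V] {Y : Set V} (hc : IsCompact Y)
    (hconv : Convex ℝ Y) (hne : Y.Nonempty) (hinv : ∀ g : V ≃ₗᵢ[ℝ] V, g '' Y = Y) :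
    ∃ r : ℝ, 0 ≤ r ∧ Y = closedBall 0 r := by
  obtain ⟨y, hy, hmax⟩ := hc.exists_isMaxOn hne continuous_norm.continuousOn
  refine ⟨‖y‖, norm_nonneg y, Subset.antisymm (fun x hx => ?_) ?_⟩
  · exact mem_closedBall_zero_iff.2 (hmax hx)
  · rw [← convexHull_sphere_eq_closedBall _ (norm_nonneg y)]
    refine convexHull_min (fun x hx => ?_) hconv
    rw [mem_sphere_zero_iff_norm] at hx
    rw [← hinv (Submodule.reflection (Submodule.span ℝ {y - x})ᗮ)]
    exact ⟨y, hy, Submodule.reflection_sub hx.symm⟩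

lemma isHyperEllipsoid_of_image_eq_closedBall {ℓ : ℕ} (hℓ : 1 ≤ ℓ) {𝕊 : Set (Euc ℓ)}
    (f : Euc ℓ →ₗ[ℝ] ℝ) (hf : ∀ x ∈ 𝕊, f x = 1) (M : Euc ℓ →ₗ[ℝ] Euc (ℓ - 1)) (r : ℝ) (hr : 0 < r)
    (hM : M '' 𝕊 = closedBall 0 r) : IsHyperEllipsoid 𝕊 := by
  let P : Euc ℓ →ₗ[ℝ] Euc (ℓ - 1) × ℝ := M.prod f
  have hball : ∀ y ∈ closedBall (0 : Euc (ℓ - 1)) r, (y, (1 : ℝ)) ∈ LinearMap.range P := by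
    intro y hy
    obtain ⟨s, hs, rfl⟩ := hM ▸ hy
    exact ⟨s, by simp [P, hf s hs]⟩
  have h01 : ((0 : Euc (ℓ - 1)), (1 : ℝ)) ∈ LinearMap.range P :=
    hball 0 (mem_closedBall_self hr.le)
  have hsurj : Function.Surjective P := by
    rw [← LinearMap.range_eq_top, eq_top_iff]
    rintro ⟨y, t⟩ -
    have hy : (y, (0 : ℝ)) ∈ LinearMap.range P := by
      by_cases hy0 : y = 0
      · rw [hy0]; exact Submodule.zero_mem _
      have hn := norm_pos_iff.2 hy0
      have h1 := hball ((r / ‖y‖) • y) (by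
        rw [mem_closedBall_zero_iff, norm_smul, norm_div, norm_norm, Real.norm_of_nonneg hr.le,
          div_mul_cancel₀ _ hn.ne'])
      have h2 := Submodule.smul_mem _ (‖y‖ / r) (Submodule.sub_mem _ h1 h01)
      have h3 : ‖y‖ / r * (r / ‖y‖) = 1 := by field_simp
      simpa [smul_smul, h3] using h2
    have h4 := Submodule.add_mem _ hy (Submodule.smul_mem _ t h01)
    simpa using h4
  have hinj : Function.Injective P :=
    (LinearMap.injective_iff_surjective_of_finrank_eq_finrank (by simp; omega)).2 hsurj
  let e := LinearEquiv.ofBijective P ⟨hinj, hsurj⟩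
  have he : ∀ x, e.symm (M x, f x) = x := e.symm_apply_apply
  let F : Euc (ℓ - 1) →ᵃ[ℝ] Euc ℓ :=
    (e.symm.toLinearMap ∘ₗ LinearMap.inl ℝ _ ℝ ∘ₗ (r • LinearMap.id)).toAffineMap +
      AffineMap.const ℝ _ (e.symm (0, 1))
  have hF : ∀ y, F y = e.symm (r • y, 1) := by
    intro y
    have : F y = e.symm (r • y, 0) + e.symm (0, 1) := rfl
    rw [this, ← map_add]; simp
  refine ⟨F, fun x y hxy => ?_, Subset.antisymm (fun s hs => ?_) ?_⟩
  · rw [hF, hF] at hxy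
    exact smul_right_injective _ hr.ne' (Prod.ext_iff.1 (e.symm.injective hxy)).1
  · have h1 : M s ∈ closedBall 0 r := hM ▸ mem_image_of_mem M hs
    rw [mem_closedBall_zero_iff] at h1
    refine ⟨r⁻¹ • M s, ?_, ?_⟩
    · rw [mem_closedBall_zero_iff, norm_smul, norm_inv, Real.norm_of_nonneg hr.le]
      exact inv_mul_le_one_of_le₀ h1 hr.le
    · rw [hF, smul_inv_smul₀ hr.ne', ← hf s hs, he]
  · rintro _ ⟨y, hy, rfl⟩
    have h1 : r • y ∈ closedBall (0 : Euc (ℓ - 1)) r := by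
      rw [mem_closedBall_zero_iff] at hy ⊢
      rw [norm_smul, Real.norm_of_nonneg hr.le]
      exact mul_le_of_le_one_right hr.le hy
    obtain ⟨s, hs, hsy⟩ := hM ▸ h1
    rw [hF, ← hsy, ← hf s hs, he]
    exact hs

/-- If the data-driven inference of the unit ball is unique, it is invariant under rotations,
whence the state space is an ellipsoid. -/
lemma isHyperEllipsoid_of_ddi_closedBall {ℓ : ℕ} (hℓ : 2 ≤ ℓ) {𝕊 : Set (Euc ℓ)}
    (hS : IsStateSpace 𝕊) (Y : Set (Euc (ℓ - 1)))
    (hY : ddi (closedBall (0 : Euc (ℓ - 1)) 1) 𝕊 = {Y}) : IsHyperEllipsoid 𝕊 := by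
  obtain ⟨hScomp, hSconv, f, -, hf⟩ := hS
  have hYmem : Y ∈ ddi (closedBall (0 : Euc (ℓ - 1)) 1) 𝕊 := hY ▸ mem_singleton Y
  have hinv : ∀ g : Euc (ℓ - 1) ≃ₗᵢ[ℝ] Euc (ℓ - 1), g '' Y = Y := by
    intro g
    obtain ⟨⟨⟨M, hM⟩, hXY, -⟩, hmin⟩ := hYmem
    suffices h : g '' Y ∈ ddi (closedBall (0 : Euc (ℓ - 1)) 1) 𝕊 by
      rwa [hY] at h
    refine ⟨⟨⟨g.toLinearEquiv.toLinearMap ∘ₗ M, ?_⟩, ?_, ?_⟩, fun R' hR' => ?_⟩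
    · rw [hM, image_image]; rfl
    · have h1 := image_mono (f := g) hXY
      rwa [g.image_closedBall, map_zero] at h1
    · rw [affineSpan_closedBall_zero_one]; exact subset_univ _
    · rw [g.isometry.hausdorffMeasure_image (Or.inr g.surjective)]
      exact hmin R' hR'
  obtain ⟨⟨⟨M, hM⟩, hXY, -⟩, -⟩ := hYmem
  have : Nonempty (Fin (ℓ - 1)) := ⟨⟨0, by omega⟩⟩
  obtain ⟨r, -, hr⟩ := exists_eq_closedBall_of_isometry_invariant
    (hM ▸ hScomp.image M.continuous_of_finiteDimensional) (hM ▸ hSconv.linear_image M)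
    ⟨0, hXY (mem_closedBall_self zero_le_one)⟩ hinv
  have hr0 : 0 < r := by
    obtain ⟨v, hv⟩ := exists_norm_eq (Euc (ℓ - 1)) zero_le_one
    have h1 := hXY (mem_closedBall_zero_iff.2 hv.le)
    rw [hr, mem_closedBall_zero_iff, hv] at h1
    linarith
  refine isHyperEllipsoid_of_image_eq_closedBall (by omega) f (fun x hx => ?_) M r hr0
    (hM ▸ hr)
  have h1 : x ∈ {x | f x = 1} := hf ▸ subset_affineSpan ℝ 𝕊 hx
  exact h1

theorem stmt_0 {ℓ : ℕ} (hℓ : 2 ≤ ℓ) (𝕊 : Set (Euc ℓ)) (hS : IsStateSpace 𝕊) :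
    (∀ (n : ℕ) (X : Set (Euc n)), X.Nonempty → Bornology.IsBounded X →
        Module.finrank ℝ (affineSpan ℝ X).direction ≤ ℓ - 1 →
        ∃ Y : Set (Euc n), ddi X 𝕊 = {Y}) ↔
      IsHyperEllipsoid 𝕊 := by
  refine ⟨fun h => ?_, fun hE n X hne hX hd =>
    exists_ddi_eq_singleton_of_isHyperEllipsoid hS hE X hne hX hd⟩
  obtain ⟨Y, hY⟩ := h (ℓ - 1) (closedBall 0 1) ⟨0, mem_closedBall_self zero_le_one⟩
    isBounded_closedBall ((Submodule.finrank_le _).trans (by simp))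
  exact isHyperEllipsoid_of_ddi_closedBall hℓ hS Y hY
end
end

section
/- Let 𝕊 ⊆ ℝ^ℓ (ℓ ≥ 2) be a state space which is a (hyper)-ellipsoid, let n ∈ ℕ, and let X ⊆ ℝⁿ be nonempty and bounded with d := dim aff(X) ≤ ℓ − 1. Then ddi(X | 𝕊) is a singleton {E}, where E is a d-dimensional ellipsoid in ℝⁿ satisfying X ⊆ E ⊆ aff(X), and every d-dimensional ellipsoid E′ in ℝⁿ with X ⊆ E′ ⊆ aff(X) has d-dimensional Hausdorff measure at least that of E (i.e., E is the minimum-volume enclosing ellipsoid of X inside aff(X)). -/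
open MeasureTheory Metric Set

noncomputable section

/-- A `d`-dimensional ellipsoid in `ℝⁿ`: the image of the closed unit ball of `ℝ^d` under an
injective affine map. -/
def IsEllipsoidOfDim (d : ℕ) {n : ℕ} (E : Set (Euc n)) : Prop :=
  ∃ F : Euc d →ᵃ[ℝ] Euc n, Function.Injective F ∧ E = F '' closedBall 0 1

section Extremal

variable {W : Type*} [NormedAddCommGroup W] [InnerProductSpace ℝ W] [FiniteDimensional ℝ W]

/-- A linear automorphism maps some orthonormal basis to positive multiples of another one. -/
lemma exists_orthonormalBasis_map_eq_smul (K : W →ₗ[ℝ] W) (hK : LinearMap.det K ≠ 0) :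
    ∃ (v u : OrthonormalBasis (Fin (Module.finrank ℝ W)) ℝ W)
      (s : Fin (Module.finrank ℝ W) → ℝ), (∀ i, 0 < s i) ∧ ∀ i, K (v i) = s i • u i := by
  have hsym := LinearMap.isSymmetric_adjoint_mul_self K
  set v := hsym.eigenvectorBasis rfl
  set μ := hsym.eigenvalues rfl
  have hinner : ∀ i j, inner ℝ (K (v i)) (K (v j)) = if i = j then μ i else 0 := by
    intro i j
    rw [← LinearMap.adjoint_inner_left]
    have h : LinearMap.adjoint K (K (v i)) = μ i • v i := hsym.apply_eigenvectorBasis rfl i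
    rw [h, real_inner_smul_left, orthonormal_iff_ite.1 v.orthonormal]
    simp
  have hinj : Function.Injective K :=
    ((LinearMap.equivOfDetNeZero K hK).injective)
  have hpos : ∀ i, 0 < ‖K (v i)‖ := fun i => by
    rw [norm_pos_iff, ne_eq, map_eq_zero_iff K hinj]
    exact v.orthonormal.ne_zero i
  have hon : Orthonormal ℝ fun i => ‖K (v i)‖⁻¹ • K (v i) := by
    refine ⟨fun i => ?_, fun i j hij => ?_⟩
    · rw [norm_smul, norm_inv, norm_norm, inv_mul_cancel₀ (hpos i).ne']
    · simp only [real_inner_smul_left, real_inner_smul_right]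
      rw [hinner, if_neg hij]; simp
  refine ⟨v, OrthonormalBasis.mk hon
    (hon.linearIndependent.span_eq_top_of_card_eq_finrank' (by simp)).ge,
    fun i => ‖K (v i)‖, hpos, fun i => ?_⟩
  simp [smul_smul, mul_inv_cancel₀ (hpos i).ne']

lemma abs_det_eq_prod_of_map_eq_smul {ι : Type*} [Fintype ι] (v u : OrthonormalBasis ι ℝ W)
    (s : ι → ℝ) (K : W →ₗ[ℝ] W) (hK : ∀ i, K (v i) = s i • u i) :
    |LinearMap.det K| = ∏ i, |s i| := by
  classical
  have h : K = (v.equiv u (Equiv.refl ι)).toLinearEquiv.toLinearMap ∘ₗ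
      Matrix.toLin v.toBasis v.toBasis (Matrix.diagonal s) := by
    refine v.toBasis.ext fun i => ?_
    rw [LinearMap.comp_apply, Matrix.toLin_self]
    simp [hK, Matrix.diagonal_apply, ite_smul]
  rw [h, LinearMap.det_comp, LinearMap.det_toLin, Matrix.det_diagonal, abs_mul, Finset.abs_prod]
  have : |LinearMap.det (v.equiv u (Equiv.refl ι)).toLinearEquiv.toLinearMap| = 1 := by
    rw [← Real.norm_eq_abs, ← LinearMap.normDet_eq_norm_det]
    exact (v.equiv u (Equiv.refl ι)).toLinearIsometry.normDet_eq_one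
  rw [this, one_mul]

/-- For a volume-preserving `K` with orthogonal polar part `U`, the midpoint of `U` and `K`
expands volume, strictly unless `K = U`. -/
lemma exists_linearIsometryEquiv_midpoint_det (K : W →ₗ[ℝ] W) (hK : |LinearMap.det K| = 1) :
    ∃ U : W ≃ₗᵢ[ℝ] W,
      |LinearMap.det ((1 / 2 : ℝ) • (U.toLinearEquiv.toLinearMap + K))| ≤ 1 →
        K = U.toLinearEquiv.toLinearMap := by
  obtain ⟨v, u, s, hs, hvu⟩ := exists_orthonormalBasis_map_eq_smul K
    (by rintro h; simp [h] at hK)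
  refine ⟨v.equiv u (Equiv.refl _), fun hle => ?_⟩
  rw [abs_det_eq_prod_of_map_eq_smul v u s K hvu] at hK
  rw [abs_det_eq_prod_of_map_eq_smul v u (fun i => (1 + s i) / 2)] at hle
  swap
  · intro i
    simp only [LinearMap.smul_apply, LinearMap.add_apply, hvu]
    simp only [LinearEquiv.coe_coe, LinearIsometryEquiv.coe_toLinearEquiv,
      OrthonormalBasis.equiv_apply_basis, Equiv.refl_apply]
    module
  have hone : ∀ i, s i = 1 := by
    by_contra! hne
    obtain ⟨j, hj⟩ := hne
    have hlt : ∏ i, |s i| < ∏ i, |(1 + s i) / 2| ^ 2 := by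
      refine Finset.prod_lt_prod (fun i _ => abs_pos.2 (hs i).ne') (fun i _ => ?_)
        ⟨j, Finset.mem_univ _, ?_⟩
      · rw [sq_abs, abs_of_pos (hs i)]
        nlinarith [sq_nonneg (s i - 1)]
      · rw [sq_abs, abs_of_pos (hs j)]
        nlinarith [sq_pos_of_ne_zero (sub_ne_zero.2 hj)]
    rw [hK, Finset.prod_pow] at hlt
    have : 0 ≤ ∏ i, |(1 + s i) / 2| := Finset.prod_nonneg fun i _ => abs_nonneg _
    nlinarith
  refine v.toBasis.ext fun i => ?_
  simp [hvu, hone]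

/-- The pairs `(A, b)` for which the sublevel set `{x | ‖A x + b‖ ≤ 1}` contains `Y`. -/
def enclosingPairs (Y : Set W) : Set ((W →L[ℝ] W) × W) :=
  {p | ∀ y ∈ Y, ‖p.1 y + p.2‖ ≤ 1}

lemma isCompact_enclosingPairs {Y : Set W} (hY : affineSpan ℝ Y = ⊤) :
    IsCompact (enclosingPairs Y) := by
  refine Metric.isCompact_of_isClosed_isBounded ?_ ?_
  · simp only [enclosingPairs, ofPred_forall]
    refine isClosed_biInter fun y _ => isClosed_le (by fun_prop) continuous_const
  · obtain ⟨y₀, hy₀⟩ : Y.Nonempty := by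
      rw [← affineSpan_nonempty (k := ℝ), hY]; exact ⟨0, trivial⟩
    have hspan : ⊤ ≤ Submodule.span ℝ ((fun x => x -ᵥ y₀) '' Y) := by
      rw [← vectorSpan_eq_span_vsub_set_right ℝ hy₀, ← direction_affineSpan, hY,
        AffineSubspace.direction_top]
    obtain ⟨C, hC, hbound⟩ := (Module.Basis.ofSpan hspan).exists_opNorm_le (F := W)
    refine isBounded_iff_forall_norm_le.2 ⟨max (C * 2) (1 + C * 2 * ‖y₀‖), fun p hp => ?_⟩
    have hA : ‖p.1‖ ≤ C * 2 := by
      refine hbound zero_le_two fun i => ?_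
      obtain ⟨y, hy, hyi⟩ := Module.Basis.ofSpan_subset hspan (mem_range_self i)
      rw [← hyi]
      calc ‖p.1 (y - y₀)‖ = ‖(p.1 y + p.2) - (p.1 y₀ + p.2)‖ := by rw [map_sub]; congr 1; abel
        _ ≤ ‖p.1 y + p.2‖ + ‖p.1 y₀ + p.2‖ := norm_sub_le _ _
        _ ≤ 2 := by linarith [hp y hy, hp y₀ hy₀]
    have hb : ‖p.2‖ ≤ 1 + C * 2 * ‖y₀‖ := by
      calc ‖p.2‖ = ‖(p.1 y₀ + p.2) - p.1 y₀‖ := by congr 1; abel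
        _ ≤ ‖p.1 y₀ + p.2‖ + ‖p.1 y₀‖ := norm_sub_le _ _
        _ ≤ 1 + C * 2 * ‖y₀‖ := add_le_add (hp y₀ hy₀) (p.1.le_of_opNorm_le hA y₀)
    exact max_le_max hA hb

/-- A maximiser of `|det A|` among the pairs enclosing a bounded spanning set. -/
lemma exists_isMaxOn_enclosingPairs {Y : Set W} (hYb : Bornology.IsBounded Y)
    (hY : affineSpan ℝ Y = ⊤) :
    ∃ p ∈ enclosingPairs Y, p.1.det ≠ 0 ∧ ∀ q ∈ enclosingPairs Y, |q.1.det| ≤ |p.1.det| := by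
  obtain ⟨R, hR0, hR⟩ := hYb.exists_pos_norm_le
  have hmem : ((R⁻¹ • ContinuousLinearMap.id ℝ W, 0) : (W →L[ℝ] W) × W) ∈ enclosingPairs Y := by
    intro y hy
    simp only [smul_apply, ContinuousLinearMap.id_apply, add_zero]
    rw [norm_smul, norm_inv, Real.norm_of_nonneg hR0.le, inv_mul_le_one₀ hR0]
    exact hR y hy
  obtain ⟨p, hp, hmax⟩ := (isCompact_enclosingPairs hY).exists_isMaxOn ⟨_, hmem⟩
    (f := fun p => |p.1.det|)
    ((ContinuousLinearMap.continuous_det.comp continuous_fst).abs.continuousOn)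
  refine ⟨p, hp, fun h0 => ?_, fun q hq => hmax hq⟩
  have h := hmax hmem
  have hdet : (R⁻¹ • ContinuousLinearMap.id ℝ W).det = R⁻¹ ^ Module.finrank ℝ W := by
    simp [ContinuousLinearMap.det]
  simp only [mem_ofPred_eq, h0, hdet, abs_zero, abs_nonpos_iff] at h
  exact (pow_pos (inv_pos.2 hR0) _).ne' h

/-- Two maximisers with the same linear part have the same translation part. -/
lemma eq_of_fst_eq_of_isMaxOn {Y : Set W} {A : W →L[ℝ] W} {b c : W} (hA : A.det ≠ 0)
    (hb : (A, b) ∈ enclosingPairs Y) (hc : (A, c) ∈ enclosingPairs Y)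
    (hmax : ∀ q ∈ enclosingPairs Y, |q.1.det| ≤ |A.det|) : b = c := by
  rcases subsingleton_or_nontrivial W with hW | hW
  · exact Subsingleton.elim _ _
  by_contra hne
  have hδ : 0 < ‖b - c‖ := norm_pos_iff.2 (sub_ne_zero.2 hne)
  set m : W := (1 / 2 : ℝ) • (b + c)
  have hmid : ∀ y ∈ Y, ‖A y + m‖ ^ 2 ≤ 1 - ‖b - c‖ ^ 2 / 4 := by
    intro y hy
    have h1 := hb y hy
    have h2 := hc y hy
    have hpar := parallelogram_law_with_norm ℝ (A y + b) (A y + c)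
    have e1 : (A y + b) + (A y + c) = (2 : ℝ) • (A y + m) := by simp only [m]; module
    have e2 : (A y + b) - (A y + c) = b - c := by abel
    rw [e1, e2, norm_smul, Real.norm_of_nonneg zero_le_two] at hpar
    simp only at h1 h2
    nlinarith [norm_nonneg (A y + b), norm_nonneg (A y + c)]
  set η := 1 - ‖b - c‖ ^ 2 / 4
  have hη : η < 1 := by simp only [η]; nlinarith
  set r := √(max η (1 / 4))
  have hη0 : 0 < max η (1 / 4) := lt_max_of_lt_right (by norm_num)
  have hr0 : 0 < r := Real.sqrt_pos.2 hη0
  have hr1 : r < 1 := by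
    rw [Real.sqrt_lt' one_pos, one_pow]
    exact max_lt hη (by norm_num)
  have hmem : (r⁻¹ • A, r⁻¹ • m) ∈ enclosingPairs Y := by
    intro y hy
    rw [smul_apply, ← smul_add, norm_smul, norm_inv, Real.norm_of_nonneg hr0.le,
      inv_mul_le_one₀ hr0]
    exact Real.le_sqrt_of_sq_le ((hmid y hy).trans (le_max_left _ _))
  have hle := hmax _ hmem
  have hdet : (r⁻¹ • A).det = r⁻¹ ^ Module.finrank ℝ W * A.det := by
    simp [ContinuousLinearMap.det]
  rw [hdet, abs_mul, abs_of_pos (pow_pos (inv_pos.2 hr0) _)] at hle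
  have hlt : 1 < r⁻¹ ^ Module.finrank ℝ W :=
    one_lt_pow₀ ((one_lt_inv₀ hr0).2 hr1) Module.finrank_pos.ne'
  nlinarith [abs_pos.2 hA]

/-- The maximiser of `|det A|` is unique up to a linear isometry. -/
lemma exists_linearIsometryEquiv_of_isMaxOn {Y : Set W} {p q : (W →L[ℝ] W) × W}
    (hp : p ∈ enclosingPairs Y) (hp0 : p.1.det ≠ 0)
    (hmax : ∀ q ∈ enclosingPairs Y, |q.1.det| ≤ |p.1.det|)
    (hq : q ∈ enclosingPairs Y) (hpq : |p.1.det| ≤ |q.1.det|) :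
    ∃ U : W ≃ₗᵢ[ℝ] W, ∀ x, q.1 x + q.2 = U (p.1 x + p.2) := by
  have heq : |q.1.det| = |p.1.det| := (hmax q hq).antisymm hpq
  set e := LinearMap.equivOfDetNeZero p.1.toLinearMap hp0
  have he : ∀ x, e x = p.1 x := fun x => rfl
  set K : W →ₗ[ℝ] W := q.1.toLinearMap ∘ₗ e.symm.toLinearMap
  have hqK : q.1.toLinearMap = K ∘ₗ p.1.toLinearMap := by
    ext x
    simp [K, ← he]
  have hKdet : |LinearMap.det K| = 1 := by
    have h : q.1.det = LinearMap.det K * p.1.det := by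
      rw [ContinuousLinearMap.det, hqK, LinearMap.det_comp]
    rw [h, abs_mul] at heq
    exact mul_right_cancel₀ (abs_pos.2 hp0).ne' (heq.trans (one_mul _).symm)
  obtain ⟨U, hU⟩ := exists_linearIsometryEquiv_midpoint_det K hKdet
  set Uc := U.toContinuousLinearEquiv.toContinuousLinearMap
  have hUp : (Uc ∘L p.1, U p.2) ∈ enclosingPairs Y := fun y hy => by
    simpa [Uc, ← map_add] using hp y hy
  have hmid : ((1 / 2 : ℝ) • (Uc ∘L p.1 + q.1), (1 / 2 : ℝ) • (U p.2 + q.2)) ∈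
      enclosingPairs Y := by
    intro y hy
    have h1 := hUp y hy
    have h2 := hq y hy
    have e1 : ((1 / 2 : ℝ) • (Uc ∘L p.1 + q.1)) y + (1 / 2 : ℝ) • (U p.2 + q.2) =
        (1 / 2 : ℝ) • (((Uc ∘L p.1) y + U p.2) + (q.1 y + q.2)) := by
      simp only [smul_apply, add_apply]
      module
    simp only at h1 ⊢
    rw [e1, norm_smul, Real.norm_of_nonneg (by norm_num)]
    linarith [norm_add_le ((Uc ∘L p.1) y + U p.2) (q.1 y + q.2)]
  have hKU : K = U.toLinearEquiv.toLinearMap := by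
    refine hU ?_
    have h := hmax _ hmid
    have hfac : ((1 / 2 : ℝ) • (Uc ∘L p.1 + q.1)).det =
        LinearMap.det ((1 / 2 : ℝ) • (U.toLinearEquiv.toLinearMap + K)) * p.1.det := by
      rw [ContinuousLinearMap.det, ContinuousLinearMap.det, ← LinearMap.det_comp]
      congr 1
      ext1 x
      have hx : q.1 x = K (p.1 x) := LinearMap.congr_fun hqK x
      simp [hx, Uc]
    rw [hfac, abs_mul] at h
    exact le_of_mul_le_mul_right (by simpa using h) (abs_pos.2 hp0)
  have hfst : q.1 = Uc ∘L p.1 := by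
    ext1 x
    have hx : q.1 x = K (p.1 x) := LinearMap.congr_fun hqK x
    rw [hx, hKU]
    rfl
  have hsnd : U p.2 = q.2 := by
    refine eq_of_fst_eq_of_isMaxOn (A := q.1) (Y := Y) ?_ (hfst ▸ hUp) hq ?_
    · exact abs_pos.1 (heq ▸ abs_pos.2 hp0)
    · exact fun r hr => heq ▸ hmax r hr
  refine ⟨U, fun x => ?_⟩
  rw [hfst, ← hsnd, map_add]
  rfl

end Extremal

section Sublevel

variable {V W : Type*} [NormedAddCommGroup V] [InnerProductSpace ℝ V] [FiniteDimensional ℝ V]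
  [NormedAddCommGroup W] [InnerProductSpace ℝ W] [FiniteDimensional ℝ W]

/-- Euclidean spaces of equal dimension are linearly isometric. -/
def linearIsometryEquivOfFinrankEq (h : Module.finrank ℝ V = Module.finrank ℝ W) : V ≃ₗᵢ[ℝ] W :=
  (stdOrthonormalBasis ℝ V).equiv (stdOrthonormalBasis ℝ W) (finCongr h)

/-- The ellipsoid `{x | ‖A x + b‖ ≤ 1}` attached to a pair `(A, b)`. -/
def ellipsoidOfPair (p : (W →L[ℝ] W) × W) : Set W := {x | ‖p.1 x + p.2‖ ≤ 1}

/-- Bijective affine images of the unit ball are ellipsoids of nondegenerate pairs. -/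
lemma image_closedBall_eq_ellipsoidOfPair (T : W ≃ₗ[ℝ] W) (c : W) :
    ∃ p : (W →L[ℝ] W) × W, p.1.det ≠ 0 ∧
      (fun x => T x + c) '' closedBall 0 1 = ellipsoidOfPair p := by
  refine ⟨(LinearMap.toContinuousLinearMap T.symm.toLinearMap, -T.symm c), ?_, ?_⟩
  · simpa [ContinuousLinearMap.det] using (LinearEquiv.isUnit_det' T.symm).ne_zero
  · ext x
    simp only [ellipsoidOfPair, mem_image, mem_closedBall_zero_iff, mem_ofPred_eq]
    constructor
    · rintro ⟨z, hz, rfl⟩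
      simpa using hz
    · intro h
      exact ⟨T.symm x + -T.symm c, h, by simp⟩

/-- The ellipsoid of a nondegenerate pair is a bijective affine image of the unit ball. -/
lemma exists_image_closedBall_eq_ellipsoidOfPair (p : (W →L[ℝ] W) × W) (hp : p.1.det ≠ 0) :
    ∃ T : W →ᵃ[ℝ] W, Function.Injective T ∧ T '' closedBall 0 1 = ellipsoidOfPair p := by
  set e := LinearMap.equivOfDetNeZero p.1.toLinearMap hp
  have he : ∀ x, e x = p.1 x := fun x => rfl
  refine ⟨e.symm.toLinearMap.toAffineMap.comp (AffineMap.id ℝ W - AffineMap.const ℝ W p.2),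
    fun x y hxy => ?_, ?_⟩
  · simpa using hxy
  · ext x
    simp only [ellipsoidOfPair, mem_image, mem_closedBall_zero_iff, mem_ofPred_eq]
    constructor
    · rintro ⟨z, hz, rfl⟩
      simpa [← he] using hz
    · exact fun h => ⟨p.1 x + p.2, h, by simp [← he]⟩

/-- A surjective affine image of the unit ball is the ellipsoid of a nondegenerate pair. -/
lemma exists_pair_of_surjective (G : V →ᵃ[ℝ] W) (hG : Function.Surjective G) :
    ∃ p : (W →L[ℝ] W) × W, p.1.det ≠ 0 ∧ G '' closedBall 0 1 = ellipsoidOfPair p := by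
  set B := G.linear
  have hGB : ∀ x, G x = B x + G 0 := fun x => by
    simpa using G.map_vadd 0 x
  have hB : Function.Surjective B := (AffineMap.linear_surjective_iff G).2 hG
  set N := (LinearMap.ker B)ᗮ
  have hrank : Module.finrank ℝ W = Module.finrank ℝ N := by
    have h1 := B.finrank_range_add_finrank_ker
    rw [LinearMap.range_eq_top.2 hB, finrank_top] at h1
    have h2 := Submodule.finrank_add_finrank_orthogonal (LinearMap.ker B)
    simp only [N]
    omega
  let j : W ≃ₗᵢ[ℝ] N := linearIsometryEquivOfFinrankEq hrank
  have hker : ∀ x : V, B (N.starProjection x) = B x := fun x => by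
    have h : x - N.starProjection x ∈ Nᗮ := Submodule.sub_starProjection_mem_orthogonal x
    rw [Submodule.orthogonal_orthogonal, LinearMap.mem_ker, map_sub, sub_eq_zero] at h
    exact h.symm
  set T₀ : W →ₗ[ℝ] W := B ∘ₗ N.subtype ∘ₗ j.toLinearEquiv.toLinearMap
  have hT₀ : Function.Surjective T₀ := fun w => by
    obtain ⟨x, rfl⟩ := hB w
    exact ⟨j.symm (N.orthogonalProjectionOnto x), by simpa [T₀] using hker x⟩
  set T : W ≃ₗ[ℝ] W := LinearEquiv.ofBijective T₀ ⟨LinearMap.injective_iff_surjective.2 hT₀, hT₀⟩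
  have hT : ∀ z, T z = B (j z) := fun z => rfl
  obtain ⟨p, hp, hTp⟩ := image_closedBall_eq_ellipsoidOfPair T (G 0)
  refine ⟨p, hp, hTp ▸ ?_⟩
  ext w
  simp only [mem_image, mem_closedBall_zero_iff]
  constructor
  · rintro ⟨x, hx, rfl⟩
    refine ⟨j.symm (N.orthogonalProjectionOnto x), ?_, ?_⟩
    · rw [LinearIsometryEquiv.norm_map]
      exact (N.norm_orthogonalProjectionOnto_apply_le x).trans hx
    · rw [hT, hGB x, ← hker x]
      simp
  · rintro ⟨z, hz, rfl⟩
    refine ⟨j z, ?_, by rw [hGB, hT]⟩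
    exact (j.norm_map z).le.trans hz

/-- In no smaller dimension, the unit ball maps onto the unit ball under a linear map. -/
lemma exists_linearMap_image_closedBall (h : Module.finrank ℝ W ≤ Module.finrank ℝ V) :
    ∃ P : V →ₗ[ℝ] W, P '' closedBall 0 1 = closedBall 0 1 := by
  let v := (stdOrthonormalBasis ℝ W).toBasis
  let u := stdOrthonormalBasis ℝ V
  have hv : Orthonormal ℝ v := by
    simp [v, (stdOrthonormalBasis ℝ W).orthonormal]
  have hu : Orthonormal ℝ (v.constr ℝ (u ∘ Fin.castLE h) ∘ v) := by
    have he : (v.constr ℝ (u ∘ Fin.castLE h) ∘ v) = u ∘ Fin.castLE h := by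
      ext1 i
      simp
    rw [he]
    exact u.orthonormal.comp _ (Fin.castLE_injective h)
  let ι : W →ₗᵢ[ℝ] V := LinearMap.isometryOfOrthonormal (v.constr ℝ (u ∘ Fin.castLE h)) hv hu
  let P := ContinuousLinearMap.adjoint ι.toContinuousLinearMap
  have hPι : ∀ x, P (ι x) = x := fun x => ext_inner_right ℝ fun y => by
    simp only [P]
    rw [ContinuousLinearMap.adjoint_inner_left]
    exact ι.inner_map_map x y
  have hP : ∀ x, ‖P x‖ ≤ ‖x‖ := fun x => by
    have h1 : ‖P‖ ≤ 1 := by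
      simpa [P] using ι.norm_toContinuousLinearMap_le
    simpa using P.le_of_opNorm_le h1 x
  refine ⟨P.toLinearMap, subset_antisymm ?_ fun y hy => ⟨ι y, ?_, hPι y⟩⟩
  · rintro _ ⟨x, hx, rfl⟩
    rw [mem_closedBall_zero_iff] at hx ⊢
    exact (hP x).trans hx
  · simpa using hy

lemma hausdorffMeasure_ellipsoidOfPair {d : ℕ} (p : (Euc d →L[ℝ] Euc d) × Euc d)
    (hp : p.1.det ≠ 0) :
    μH[(d : ℝ)] (ellipsoidOfPair p) =
      ENNReal.ofReal |p.1.det|⁻¹ * μH[(d : ℝ)] (closedBall (0 : Euc d) 1) := by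
  have h : ellipsoidOfPair p = p.1.toLinearMap ⁻¹' closedBall (-p.2) 1 := by
    ext x
    simp [ellipsoidOfPair, dist_eq_norm]
  rw [h, Measure.addHaar_preimage_linearMap _ hp, Measure.addHaar_closedBall_center, abs_inv]

lemma hausdorffMeasure_ellipsoidOfPair_le_iff {d : ℕ} {p q : (Euc d →L[ℝ] Euc d) × Euc d}
    (hp : p.1.det ≠ 0) (hq : q.1.det ≠ 0) :
    μH[(d : ℝ)] (ellipsoidOfPair p) ≤ μH[(d : ℝ)] (ellipsoidOfPair q) ↔
      |q.1.det| ≤ |p.1.det| := by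
  rw [hausdorffMeasure_ellipsoidOfPair p hp, hausdorffMeasure_ellipsoidOfPair q hq,
    ENNReal.mul_le_mul_iff_left (measure_closedBall_pos _ _ one_pos).ne'
      measure_closedBall_lt_top.ne, ENNReal.ofReal_le_ofReal_iff (by positivity),
    inv_le_inv₀ (abs_pos.2 hp) (abs_pos.2 hq)]

/-- Affine images of the unit ball are linear images of an ellipsoidal state space. -/
lemma exists_linearMap_image_stateSpace {ℓ n : ℕ} {𝕊 : Set (Euc ℓ)} (hS : IsStateSpace 𝕊)
    {F : Euc (ℓ - 1) →ᵃ[ℝ] Euc ℓ} (hF : Function.Injective F) (hSF : 𝕊 = F '' closedBall 0 1)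
    (G : Euc (ℓ - 1) →ᵃ[ℝ] Euc n) :
    ∃ M : Euc ℓ →ₗ[ℝ] Euc n, G '' closedBall 0 1 = M '' 𝕊 := by
  obtain ⟨-, -, f, -, hf⟩ := hS
  have hf1 : ∀ x ∈ closedBall (0 : Euc (ℓ - 1)) 1, f (F x) = 1 := fun x hx => by
    have h : F x ∈ (affineSpan ℝ 𝕊 : Set (Euc ℓ)) :=
      subset_affineSpan ℝ 𝕊 (hSF ▸ mem_image_of_mem F hx)
    rwa [hf] at h
  have hFlin : ∀ x, F x = F.linear x + F 0 := fun x => by simpa using F.map_vadd 0 x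
  have hGlin : ∀ x, G x = G.linear x + G 0 := fun x => by simpa using G.map_vadd 0 x
  obtain ⟨L, hL⟩ := F.linear.exists_leftInverse_of_injective
    (LinearMap.ker_eq_bot.2 ((AffineMap.linear_injective_iff F).2 hF))
  have h0 : f (F 0) = 1 := hf1 0 (by simp)
  refine ⟨G.linear ∘ₗ L ∘ₗ (LinearMap.id - f.smulRight (F 0)) + f.smulRight (G 0), ?_⟩
  rw [hSF, image_image]
  refine image_congr fun x hx => ?_
  have hLx : L (F.linear x) = x := LinearMap.congr_fun hL x
  simp only [LinearMap.add_apply, LinearMap.comp_apply, LinearMap.sub_apply, LinearMap.id_apply,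
    LinearMap.smulRight_apply, hf1 x hx, one_smul]
  rw [hFlin x, hGlin x]
  simp [hLx]

/-- A point and a direction space of dimension `d` give an isometric parametrisation. -/
lemma exists_affineIsometry_range_eq {d n : ℕ} (S : AffineSubspace ℝ (Euc n))
    (hS : (S : Set (Euc n)).Nonempty) (hd : d = Module.finrank ℝ S.direction) :
    ∃ (φ : Euc d →ᵃ[ℝ] Euc n) (ψ : Euc n →ᵃ[ℝ] Euc d), Isometry φ ∧ range φ = S ∧
      ∀ x, ψ (φ x) = x := by
  obtain ⟨x₀, hx₀⟩ := hS
  let j : Euc d ≃ₗᵢ[ℝ] S.direction := linearIsometryEquivOfFinrankEq (by simpa using hd)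
  refine ⟨(S.direction.subtype ∘ₗ j.toLinearEquiv.toLinearMap).toAffineMap +
      AffineMap.const ℝ (Euc d) x₀,
    (j.symm.toLinearEquiv.toLinearMap ∘ₗ
      S.direction.orthogonalProjectionOnto.toLinearMap).toAffineMap.comp
        (AffineMap.id ℝ (Euc n) - AffineMap.const ℝ (Euc n) x₀), ?_, ?_, fun x => ?_⟩
  · refine Isometry.of_dist_eq fun x y => ?_
    simp only [AffineMap.coe_add, AffineMap.coe_const, Pi.add_apply, Function.const_apply,
      dist_add_right]
    exact j.dist_map x y
  · ext y
    simp only [mem_range, SetLike.mem_coe]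
    constructor
    · rintro ⟨x, rfl⟩
      exact AffineSubspace.vadd_mem_of_mem_direction (j x).2 hx₀
    · intro hy
      refine ⟨j.symm ⟨y - x₀, AffineSubspace.vsub_mem_direction hy hx₀⟩, ?_⟩
      simp
  · simp

/-- In isometric coordinates `φ` on `aff X`, every affine image of the unit ball lying between
`X` and `aff X` is the ellipsoid of a nondegenerate pair enclosing `X`. -/
lemma exists_enclosingPair_of_image_closedBall {d n : ℕ} {X : Set (Euc n)}
    {φ : Euc d →ᵃ[ℝ] Euc n} {ψ : Euc n →ᵃ[ℝ] Euc d}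
    (hφ : range φ = (affineSpan ℝ X : Set (Euc n))) (hψ : ∀ x, ψ (φ x) = x)
    (hspan : affineSpan ℝ (φ ⁻¹' X) = ⊤) (G : V →ᵃ[ℝ] Euc n)
    (hXG : X ⊆ G '' closedBall 0 1)
    (hGX : G '' closedBall 0 1 ⊆ (affineSpan ℝ X : Set (Euc n))) :
    ∃ p ∈ enclosingPairs (φ ⁻¹' X), p.1.det ≠ 0 ∧
      G '' closedBall 0 1 = φ '' ellipsoidOfPair p := by
  have hφψ : ∀ y ∈ (affineSpan ℝ X : Set (Euc n)), φ (ψ y) = y := by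
    rw [← hφ]
    rintro _ ⟨x, rfl⟩
    rw [hψ]
  have hY : φ ⁻¹' X ⊆ ψ.comp G '' closedBall 0 1 := fun y hy => by
    obtain ⟨x, hx, hxy⟩ := hXG hy
    exact ⟨x, hx, by simp [hxy, hψ]⟩
  have hsurj : Function.Surjective (ψ.comp G) := by
    have hle : affineSpan ℝ (φ ⁻¹' X) ≤ AffineSubspace.map (ψ.comp G) ⊤ := by
      rw [affineSpan_le]
      intro y hy
      obtain ⟨x, -, hxy⟩ := hY hy
      exact ⟨x, trivial, hxy⟩
    intro w
    obtain ⟨x, -, hx⟩ := hle (hspan ▸ AffineSubspace.mem_top ℝ (Euc d) w)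
    exact ⟨x, hx⟩
  obtain ⟨p, hp, hpG⟩ := exists_pair_of_surjective (ψ.comp G) hsurj
  refine ⟨p, fun y hy => (hpG ▸ hY hy : y ∈ ellipsoidOfPair p), hp, ?_⟩
  rw [← hpG, image_image]
  refine (image_congr fun x hx => ?_).trans rfl
  exact (hφψ _ (hGX (mem_image_of_mem G hx))).symm

end Sublevel

theorem stmt_3 {ℓ : ℕ} (hℓ : 2 ≤ ℓ) (𝕊 : Set (Euc ℓ)) (hS : IsStateSpace 𝕊)
    (hSE : IsHyperEllipsoid 𝕊) (n : ℕ) (X : Set (Euc n)) (hXne : X.Nonempty)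
    (hXb : Bornology.IsBounded X) (d : ℕ)
    (hd : d = Module.finrank ℝ (affineSpan ℝ X).direction) (hdℓ : d ≤ ℓ - 1) :
    ∃ E : Set (Euc n), ddi X 𝕊 = {E} ∧ IsEllipsoidOfDim d E ∧
      X ⊆ E ∧ E ⊆ (affineSpan ℝ X : Set (Euc n)) ∧
      ∀ E' : Set (Euc n), IsEllipsoidOfDim d E' → X ⊆ E' →
        E' ⊆ (affineSpan ℝ X : Set (Euc n)) → μH[(d : ℝ)] E ≤ μH[(d : ℝ)] E' := by
  obtain ⟨F, hF, hSF⟩ := hSE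
  obtain ⟨φ, ψ, hφiso, hφ, hψ⟩ := exists_affineIsometry_range_eq (affineSpan ℝ X)
    ((affineSpan_nonempty ℝ).2 hXne) hd
  have hXφ : X ⊆ range φ := hφ ▸ subset_affineSpan ℝ X
  have hspan : affineSpan ℝ (φ ⁻¹' X) = ⊤ := by
    rw [eq_top_iff]
    intro y _
    have hy : φ y ∈ affineSpan ℝ (φ '' (φ ⁻¹' X)) := by
      rw [image_preimage_eq_of_subset hXφ]
      exact (hφ ▸ mem_range_self y : φ y ∈ (affineSpan ℝ X : Set (Euc n)))
    rw [← AffineSubspace.map_span] at hy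
    obtain ⟨z, hz, hzy⟩ := hy
    exact hφiso.injective hzy ▸ hz
  obtain ⟨p, hp, hp0, hmax⟩ := exists_isMaxOn_enclosingPairs
    (hφiso.antilipschitz.isBounded_preimage hXb) hspan
  have hmeas : ∀ s : Set (Euc d), μH[(d : ℝ)] (φ '' s) = μH[(d : ℝ)] s :=
    fun s => hφiso.hausdorffMeasure_image (Or.inl (Nat.cast_nonneg d)) s
  obtain ⟨T, hT, hTp⟩ := exists_image_closedBall_eq_ellipsoidOfPair p hp0
  have hXE : X ⊆ φ '' ellipsoidOfPair p := by
    rw [← image_preimage_eq_of_subset hXφ]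
    exact image_mono hp
  have hEX : φ '' ellipsoidOfPair p ⊆ (affineSpan ℝ X : Set (Euc n)) :=
    hφ ▸ image_subset_range φ _
  have hle : ∀ {m : ℕ} (G : Euc m →ᵃ[ℝ] Euc n), X ⊆ G '' closedBall 0 1 →
      G '' closedBall 0 1 ⊆ (affineSpan ℝ X : Set (Euc n)) →
      μH[(d : ℝ)] (φ '' ellipsoidOfPair p) ≤ μH[(d : ℝ)] (G '' closedBall 0 1) := by
    intro m G hXG hGX
    obtain ⟨q, hq, hq0, hGq⟩ :=
      exists_enclosingPair_of_image_closedBall hφ hψ hspan G hXG hGX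
    rw [hGq, hmeas, hmeas, hausdorffMeasure_ellipsoidOfPair_le_iff hp0 hq0]
    exact hmax q hq
  have hadm : Admissible 𝕊 X (φ '' ellipsoidOfPair p) := by
    obtain ⟨P, hP⟩ := exists_linearMap_image_closedBall (V := Euc (ℓ - 1)) (W := Euc d)
      (by simpa using hdℓ)
    obtain ⟨M, hM⟩ := exists_linearMap_image_stateSpace hS hF hSF
      ((φ.comp T).comp P.toAffineMap)
    refine ⟨⟨M, ?_⟩, hXE, hEX⟩
    rw [← hM, ← hTp, ← hP, image_image, image_image]
    rfl
  have hball : ∀ R, Admissible 𝕊 X R →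
      ∃ G : Euc (ℓ - 1) →ᵃ[ℝ] Euc n, R = G '' closedBall 0 1 := by
    rintro R ⟨⟨M, rfl⟩, -, -⟩
    exact ⟨M.toAffineMap.comp F, by rw [hSF, image_image]; rfl⟩
  refine ⟨φ '' ellipsoidOfPair p, ?_, ⟨φ.comp T, hφiso.injective.comp hT, ?_⟩, hXE, hEX, ?_⟩
  · ext R
    rw [mem_singleton_iff]
    constructor
    · rintro ⟨hR, hRmin⟩
      obtain ⟨G, rfl⟩ := hball R hR
      obtain ⟨q, hq, hq0, hGq⟩ :=
        exists_enclosingPair_of_image_closedBall hφ hψ hspan G hR.2.1 hR.2.2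
      have hqp := hRmin _ hadm
      rw [← hd, hGq, hmeas, hmeas, hausdorffMeasure_ellipsoidOfPair_le_iff hq0 hp0] at hqp
      obtain ⟨U, hU⟩ := exists_linearIsometryEquiv_of_isMaxOn hp hp0 hmax hq hqp
      rw [hGq]
      congr 1
      ext x
      simp only [ellipsoidOfPair, mem_ofPred_eq, hU, LinearIsometryEquiv.norm_map]
    · rintro rfl
      refine ⟨hadm, fun R hR => ?_⟩
      obtain ⟨G, rfl⟩ := hball R hR
      rw [← hd]
      exact hle G hR.2.1 hR.2.2
  · rw [← hTp, image_image]
    rfl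
  · rintro _ ⟨G, -, rfl⟩ hXG hGX
    exact hle G hXG hGX
end
end

section
/- Let ℓ ≥ 2 and let the state space 𝕊 ⊆ ℝ^ℓ be an (ℓ−1)-dimensional Euclidean ball, namely 𝕊 = {a ∈ H : ‖a − c‖ ≤ r} for an affine hyperplane H with 0 ∉ H, a center c ∈ H, and radius r > 0. For a finite nonempty set S ⊆ 𝕊 the following are equivalent: (i) S is the vertex set of a regular (ℓ−1)-simplex inscribed in the boundary sphere of 𝕊, i.e., S consists of ℓ points of {a ∈ H : ‖a − c‖ = r} with all pairwise distances equal and whose affine span is H; (ii) ddi(S | 𝕊) = {𝕊}, and every subset S′ ⊆ 𝕊 with ddi(S′ | 𝕊) = {𝕊} has cardinality at least the cardinality of S. -/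
open MeasureTheory Metric Set

noncomputable section

theorem inner_eq_of_regular {V ι : Type*} [NormedAddCommGroup V] [InnerProductSpace ℝ V]
    {u : ι → V} {r δ : ℝ} (hnorm : ∀ i, ‖u i‖ = r)
    (hdist : ∀ i j, i ≠ j → ‖u i - u j‖ = δ) [DecidableEq ι] (i j : ι) :
    inner ℝ (u i) (u j) = (r ^ 2 - δ ^ 2 / 2) + if i = j then δ ^ 2 / 2 else 0 := by
  split_ifs with h
  · subst h
    rw [real_inner_self_eq_norm_sq, hnorm]; ring
  · have := norm_sub_sq_real (u i) (u j)
    rw [hdist i j h, hnorm, hnorm] at this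
    linarith

/-- The vertices of a regular simplex centred at the origin form a tight frame. -/
theorem tight_frame_of_regular {V ι : Type*} [NormedAddCommGroup V] [InnerProductSpace ℝ V]
    [Fintype ι] {u : ι → V} {r δ : ℝ} (hnorm : ∀ i, ‖u i‖ = r)
    (hdist : ∀ i j, i ≠ j → ‖u i - u j‖ = δ)
    (hspan : ∀ x : V, ∃ a : ι → ℝ, ∑ i, a i = 0 ∧ ∑ i, a i • u i = x) :
    ∑ i, u i = 0 ∧ (∀ x : V, ∑ i, inner ℝ (u i) x ^ 2 = δ ^ 2 / 2 * ‖x‖ ^ 2) := by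
  classical
  have hin : ∀ (a : ι → ℝ), ∑ i, a i = 0 → ∀ i,
      inner ℝ (u i) (∑ j, a j • u j) = δ ^ 2 / 2 * a i := by
    intro a ha i
    simp only [inner_sum, inner_smul_right, inner_eq_of_regular hnorm hdist, mul_add,
      Finset.sum_add_distrib, ← Finset.sum_mul, ha, mul_ite, mul_zero, Finset.sum_ite_eq,
      Finset.mem_univ, if_true]
    ring
  refine ⟨?_, fun x => ?_⟩
  · obtain ⟨a, ha, hx⟩ := hspan (∑ i, u i)
    rw [← inner_self_eq_zero (𝕜 := ℝ)]
    nth_rewrite 2 [← hx]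
    rw [sum_inner]
    simp only [hin a ha, ← Finset.mul_sum, ha, mul_zero]
  · obtain ⟨a, ha, rfl⟩ := hspan x
    rw [← real_inner_self_eq_norm_sq, sum_inner, Finset.mul_sum]
    refine Finset.sum_congr rfl fun i _ => ?_
    rw [inner_smul_left, hin a ha]
    simp only [conj_trivial]
    ring

/-- A linear map composed with a translation that sends a regular simplex inscribed in a sphere into
the ball does not increase volume; if it preserves volume, it is a linear isometry. -/
theorem abs_det_le_one_of_regular {V ι : Type*} [NormedAddCommGroup V] [InnerProductSpace ℝ V]
    [FiniteDimensional ℝ V] [Fintype ι] (hcard : Fintype.card ι = Module.finrank ℝ V + 1)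
    {u : ι → V} {r δ : ℝ} (hr : 0 < r) (hnorm : ∀ i, ‖u i‖ = r)
    (hdist : ∀ i j, i ≠ j → ‖u i - u j‖ = δ)
    (hspan : ∀ x : V, ∃ a : ι → ℝ, ∑ i, a i = 0 ∧ ∑ i, a i • u i = x)
    (T : V →ₗ[ℝ] V) (b : V) (hT : ∀ i, ‖T (u i) + b‖ ≤ r) :
    |T.det| ≤ 1 ∧ (|T.det| = 1 → b = 0 ∧ ∀ x, ‖T x‖ = ‖x‖) := by
  classical
  obtain ⟨hsum, hframe⟩ := tight_frame_of_regular hnorm hdist hspan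
  set n := Module.finrank ℝ V with hn
  set K := δ ^ 2 / 2 with hK
  have hι : Nonempty ι := Fintype.card_pos_iff.1 (by omega)
  have hnK : (n + 1) * r ^ 2 = n * K := by
    have h0 : inner ℝ (u hι.some) (∑ j, u j) = 0 := by rw [hsum, inner_zero_right]
    simp only [inner_sum, inner_eq_of_regular hnorm hdist, Finset.sum_add_distrib,
      Finset.sum_ite_eq, Finset.mem_univ, if_true, Finset.sum_const, Finset.card_univ, hcard,
      nsmul_eq_mul] at h0
    push_cast at h0
    rw [← hK] at h0
    linarith
  have hKpos : 0 < K := by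
    have : 0 < (n : ℝ) * K := by rw [← hnK]; positivity
    exact pos_of_mul_pos_right this (by positivity)
  have hpos := T.isPositive_adjoint_comp_self
  have hsym := hpos.isSymmetric
  set lam := hsym.eigenvalues hn.symm
  set e := hsym.eigenvectorBasis hn.symm
  have hnn : ∀ k, 0 ≤ lam k := hpos.nonneg_eigenvalues hn.symm
  have hdet : T.det ^ 2 = ∏ k, lam k := by
    rw [← sq_abs, ← T.normDet_eq_abs_det]
    exact T.normDet_sq.trans <| hsym.det_eq_prod_eigenvalues hn.symm
  have hTnorm : ∀ x, ‖T x‖ ^ 2 = ∑ k, lam k * inner ℝ x (e k) ^ 2 := by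
    intro x
    rw [← real_inner_self_eq_norm_sq, ← LinearMap.adjoint_inner_right,
      ← e.sum_inner_mul_inner]
    refine Finset.sum_congr rfl fun k _ => ?_
    have : inner ℝ (e k) (T.adjoint (T x)) = lam k * inner ℝ x (e k) := by
      have h := hsym (e k) x
      rw [hsym.apply_eigenvectorBasis hn.symm k] at h
      rw [real_inner_comm (e k) x]
      simpa [inner_smul_left] using h.symm
    rw [this]; ring
  have hTsum : ∑ i, ‖T (u i)‖ ^ 2 = K * ∑ k, lam k := by
    simp only [hTnorm]
    rw [Finset.sum_comm, Finset.mul_sum]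
    refine Finset.sum_congr rfl fun k _ => ?_
    rw [← Finset.mul_sum, hframe, e.norm_eq_one]; ring
  have hall : ∑ i, ‖T (u i) + b‖ ^ 2 = K * ∑ k, lam k + (n + 1) * ‖b‖ ^ 2 := by
    simp only [norm_add_sq_real, Finset.sum_add_distrib, hTsum, ← Finset.mul_sum,
      ← sum_inner, ← map_sum, hsum, map_zero, inner_zero_left, Finset.sum_const,
      Finset.card_univ, hcard, nsmul_eq_mul]
    push_cast; ring
  have hle : ∑ i, ‖T (u i) + b‖ ^ 2 ≤ n * K := by
    rw [← hnK]
    calc _ ≤ ∑ i : ι, r ^ 2 := Finset.sum_le_sum fun i _ => by gcongr; exact hT i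
      _ = _ := by simp [hcard]
  have hlam : K * ∑ k, (lam k - 1) + (n + 1) * ‖b‖ ^ 2 ≤ 0 := by
    simp only [Finset.sum_sub_distrib, Finset.sum_const, Finset.card_univ, Fintype.card_fin,
      nsmul_eq_mul, mul_one]
    linarith
  have hs0 : ∑ k, (lam k - 1) ≤ 0 := by
    by_contra! h
    have := mul_pos hKpos h
    have : 0 ≤ (n + 1) * ‖b‖ ^ 2 := by positivity
    linarith
  have hexp : ∀ k, lam k ≤ Real.exp (lam k - 1) := fun k => by
    linarith [Real.add_one_le_exp (lam k - 1)]
  have hprod : ∏ k, lam k ≤ Real.exp (∑ k, (lam k - 1)) := by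
    rw [Real.exp_sum]
    exact Finset.prod_le_prod (fun k _ => hnn k) fun k _ => hexp k
  refine ⟨?_, fun h1 => ?_⟩
  · rw [← sq_le_one_iff_abs_le_one, hdet]
    exact hprod.trans (Real.exp_le_one_iff.2 hs0)
  · have hp1 : ∏ k, lam k = 1 := by rw [← hdet, ← sq_abs, h1, one_pow]
    have hs : ∑ k, (lam k - 1) = 0 := by
      refine le_antisymm hs0 ?_
      rwa [hp1, Real.one_le_exp_iff] at hprod
    have hb : b = 0 := by
      rw [hs, mul_zero, zero_add] at hlam
      have : ‖b‖ ^ 2 ≤ 0 := by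
        by_contra! h
        have : 0 < ((n : ℝ) + 1) * ‖b‖ ^ 2 := by positivity
        linarith
      simpa using this
    have hpk : ∀ k, 0 < lam k := fun k => (hnn k).lt_of_ne fun h => by
      rw [Finset.prod_eq_zero (Finset.mem_univ k) h.symm] at hp1
      exact zero_ne_one hp1
    have hone : ∀ k, lam k = 1 := by
      by_contra! h
      obtain ⟨k, hk⟩ := h
      have : ∏ k, lam k < ∏ k, Real.exp (lam k - 1) :=
        Finset.prod_lt_prod (fun k _ => hpk k) (fun k _ => hexp k)
          ⟨k, Finset.mem_univ k, by linarith [Real.add_one_lt_exp (sub_ne_zero.2 hk)]⟩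
      rw [hp1, ← Real.exp_sum, hs, Real.exp_zero] at this
      exact lt_irrefl _ this
    refine ⟨hb, fun x => ?_⟩
    have : ‖T x‖ ^ 2 = ‖x‖ ^ 2 := by
      rw [hTnorm, ← e.sum_sq_norm_inner_left x]
      simp [hone]
    exact (sq_eq_sq₀ (norm_nonneg _) (norm_nonneg _)).1 this

/-- The endomorphism of `ker f` induced by a linear map preserving `f`. -/
def kerRestrict {E : Type*} [AddCommGroup E] [Module ℝ E] {f : E →ₗ[ℝ] ℝ} {M : E →ₗ[ℝ] E}
    (hM : f ∘ₗ M = f) : LinearMap.ker f →ₗ[ℝ] LinearMap.ker f :=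
  M.restrict fun x hx => by
    rw [LinearMap.mem_ker] at hx ⊢
    rw [← LinearMap.comp_apply, hM, hx]

section Hyperplane

variable {ℓ : ℕ} {f : Euc ℓ →ₗ[ℝ] ℝ} {c : Euc ℓ} {r : ℝ}

/-- The ball of radius `r` around `c` in the affine hyperplane `{a | f a = 1}`. -/
def hyperBall (f : Euc ℓ →ₗ[ℝ] ℝ) (c : Euc ℓ) (r : ℝ) : Set (Euc ℓ) :=
  {a | f a = 1 ∧ ‖a - c‖ ≤ r}

theorem image_hyperBall_eq (hc : f c = 1) {M : Euc ℓ →ₗ[ℝ] Euc ℓ} (hM : f ∘ₗ M = f) :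
    M '' hyperBall f c r =
      (fun x : LinearMap.ker f => M c + (x : Euc ℓ)) '' (kerRestrict hM '' closedBall 0 r) := by
  ext y
  constructor
  · rintro ⟨a, ⟨ha1, ha2⟩, rfl⟩
    refine ⟨_, ⟨⟨a - c, by simp [ha1, hc]⟩, by simpa using ha2, rfl⟩, ?_⟩
    simp [kerRestrict]
  · rintro ⟨_, ⟨x, hx, rfl⟩, rfl⟩
    refine ⟨c + x, ⟨by simp [hc, LinearMap.mem_ker.1 x.2], by simpa using hx⟩, ?_⟩
    simp [kerRestrict]

theorem hausdorffMeasure_image_hyperBall (hc : f c = 1) {M : Euc ℓ →ₗ[ℝ] Euc ℓ}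
    (hM : f ∘ₗ M = f) :
    μH[(Module.finrank ℝ (LinearMap.ker f) : ℝ)] (M '' hyperBall f c r) =
      ENNReal.ofReal |(kerRestrict hM).det| *
        μH[(Module.finrank ℝ (LinearMap.ker f) : ℝ)]
          (closedBall (0 : LinearMap.ker f) r) := by
  have hiso : Isometry (fun x : LinearMap.ker f => M c + (x : Euc ℓ)) :=
    (isometry_add_left (M c)).comp isometry_subtype_coe
  rw [image_hyperBall_eq hc hM, hiso.hausdorffMeasure_image (Or.inl (Nat.cast_nonneg _)),
    Measure.addHaar_image_linearMap]

theorem hausdorffMeasure_hyperBall (hc : f c = 1) :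
    μH[(Module.finrank ℝ (LinearMap.ker f) : ℝ)] (hyperBall f c r) =
      μH[(Module.finrank ℝ (LinearMap.ker f) : ℝ)] (closedBall (0 : LinearMap.ker f) r) := by
  have h : f ∘ₗ LinearMap.id = f := LinearMap.comp_id f
  have hid : kerRestrict h = LinearMap.id := by ext x; simp [kerRestrict]
  simpa [hid] using hausdorffMeasure_image_hyperBall (r := r) hc h

theorem image_hyperBall_measure_le_iff (hc : f c = 1) (hr : 0 < r) {M : Euc ℓ →ₗ[ℝ] Euc ℓ}
    (hM : f ∘ₗ M = f) :
    μH[(Module.finrank ℝ (LinearMap.ker f) : ℝ)] (M '' hyperBall f c r) ≤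
      μH[(Module.finrank ℝ (LinearMap.ker f) : ℝ)] (hyperBall f c r) ↔
    |(kerRestrict hM).det| ≤ 1 := by
  have h0 : μH[(Module.finrank ℝ (LinearMap.ker f) : ℝ)]
      (closedBall (0 : LinearMap.ker f) r) ≠ 0 := (measure_closedBall_pos _ _ hr).ne'
  have h1 : μH[(Module.finrank ℝ (LinearMap.ker f) : ℝ)]
      (closedBall (0 : LinearMap.ker f) r) ≠ ⊤ := (isCompact_closedBall _ _).measure_ne_top
  rw [hausdorffMeasure_image_hyperBall hc hM, hausdorffMeasure_hyperBall hc]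
  nth_rewrite 2 [← one_mul (μH[_] _)]
  rw [ENNReal.mul_le_mul_iff_left h0 h1, ENNReal.ofReal_le_one]

theorem le_image_hyperBall_measure_iff (hc : f c = 1) (hr : 0 < r) {M : Euc ℓ →ₗ[ℝ] Euc ℓ}
    (hM : f ∘ₗ M = f) :
    μH[(Module.finrank ℝ (LinearMap.ker f) : ℝ)] (hyperBall f c r) ≤
      μH[(Module.finrank ℝ (LinearMap.ker f) : ℝ)] (M '' hyperBall f c r) ↔
    1 ≤ |(kerRestrict hM).det| := by
  have h0 : μH[(Module.finrank ℝ (LinearMap.ker f) : ℝ)]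
      (closedBall (0 : LinearMap.ker f) r) ≠ 0 := (measure_closedBall_pos _ _ hr).ne'
  have h1 : μH[(Module.finrank ℝ (LinearMap.ker f) : ℝ)]
      (closedBall (0 : LinearMap.ker f) r) ≠ ⊤ := (isCompact_closedBall _ _).measure_ne_top
  rw [hausdorffMeasure_image_hyperBall hc hM, hausdorffMeasure_hyperBall hc]
  nth_rewrite 1 [← one_mul (μH[_] _)]
  rw [ENNReal.mul_le_mul_iff_left h0 h1, ENNReal.one_le_ofReal]

theorem span_eq_top_of_affineSpan_eq (hc : f c = 1) {X : Set (Euc ℓ)}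
    (hX : (affineSpan ℝ X : Set (Euc ℓ)) = {x | f x = 1}) : Submodule.span ℝ X = ⊤ := by
  have hsub : {x | f x = 1} ⊆ (Submodule.span ℝ X : Set (Euc ℓ)) :=
    hX ▸ affineSpan_subset_span
  refine eq_top_iff.2 fun x _ => ?_
  have h : x = (f x - 1) • c + (x - (f x - 1) • c) := by abel
  rw [h]
  exact add_mem (Submodule.smul_mem _ _ (hsub hc)) (hsub (by simp [hc]))

theorem affineSpan_subset_hyperplane {X : Set (Euc ℓ)} (h1 : ∀ x ∈ X, f x = 1) (hc : f c = 1) :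
    (affineSpan ℝ X : Set (Euc ℓ)) ⊆ {x | f x = 1} := by
  have : affineSpan ℝ X ≤ AffineSubspace.mk' c (LinearMap.ker f) :=
    affineSpan_le.2 fun x hx => by simp [h1 x hx, hc]
  intro x hx
  have := this hx
  simp only [AffineSubspace.mem_mk', vsub_eq_sub, LinearMap.mem_ker, map_sub, hc] at this
  simpa [sub_eq_zero] using this

theorem affineSpan_eq_of_span_eq_top (hc : f c = 1) {ι : Type*} [Fintype ι] {s : ι → Euc ℓ}
    (h1 : ∀ i, f (s i) = 1) (hs : Submodule.span ℝ (range s) = ⊤) :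
    (affineSpan ℝ (range s) : Set (Euc ℓ)) = {x | f x = 1} := by
  refine (affineSpan_subset_hyperplane (by simpa using h1) hc).antisymm fun x hx => ?_
  obtain ⟨a, rfl⟩ := (Submodule.mem_span_range_iff_exists_fun ℝ).1 (hs ▸ Submodule.mem_top :
    x ∈ Submodule.span ℝ (range s))
  have ha : ∑ i, a i = 1 := by simpa [h1] using hx
  rw [← Finset.univ.affineCombination_eq_linear_combination s a ha]
  exact affineCombination_mem_affineSpan ha s

theorem affineSpan_eq_of_hyperBall_subset (hc : f c = 1) (hr : 0 < r) {X : Set (Euc ℓ)}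
    (hX : X ⊆ hyperBall f c r) (h : hyperBall f c r ⊆ affineSpan ℝ X) :
    (affineSpan ℝ X : Set (Euc ℓ)) = {x | f x = 1} := by
  refine (affineSpan_subset_hyperplane (fun x hx => (hX hx).1) hc).antisymm fun x hx => ?_
  have hcX : c ∈ affineSpan ℝ X := h ⟨hc, by simp [hr.le]⟩
  rcases eq_or_ne x c with rfl | hxc
  · exact hcX
  have hpos : 0 < ‖x - c‖ := norm_pos_iff.2 (sub_ne_zero.2 hxc)
  set t := r / ‖x - c‖ with ht
  have htpos : 0 < t := by positivity
  have hp : c + t • (x - c) ∈ affineSpan ℝ X := by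
    refine h ⟨by simp [hc, mem_ofPred.1 hx], ?_⟩
    rw [add_sub_cancel_left, norm_smul, Real.norm_of_nonneg htpos.le, ht,
      div_mul_cancel₀ _ hpos.ne']
  have := AffineMap.lineMap_mem t⁻¹ hcX hp
  rwa [AffineMap.lineMap_apply, vsub_eq_sub, vadd_eq_add, add_sub_cancel_left, smul_smul,
    inv_mul_cancel₀ htpos.ne', one_smul, sub_add_cancel] at this

theorem finrank_direction_affineSpan_eq (hc : f c = 1) {X : Set (Euc ℓ)}
    (hX : (affineSpan ℝ X : Set (Euc ℓ)) = {x | f x = 1}) :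
    Module.finrank ℝ (affineSpan ℝ X).direction = Module.finrank ℝ (LinearMap.ker f) := by
  have : affineSpan ℝ X = AffineSubspace.mk' c (LinearMap.ker f) := by
    apply SetLike.coe_injective
    rw [hX]
    ext x
    simp [hc, sub_eq_zero]
  rw [this, AffineSubspace.direction_mk']

/-- The family `s` enumerates the vertices of a regular simplex inscribed in the boundary sphere
of `hyperBall f c r`. -/
structure IsInscribedRegular (f : Euc ℓ →ₗ[ℝ] ℝ) (c : Euc ℓ) (r δ : ℝ)
    (s : Fin ℓ → Euc ℓ) : Prop where
  map_eq_one : ∀ i, f (s i) = 1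
  norm_sub : ∀ i, ‖s i - c‖ = r
  dist_eq : ∀ i j, i ≠ j → dist (s i) (s j) = δ
  span_eq_top : Submodule.span ℝ (range s) = ⊤

theorem finrank_ker_add_one (hc : f c = 1) : Module.finrank ℝ (LinearMap.ker f) + 1 = ℓ := by
  have h := f.finrank_range_add_finrank_ker
  have hsurj : LinearMap.range f = ⊤ := LinearMap.range_eq_top.2 fun y => ⟨y • c, by simp [hc]⟩
  rw [hsurj, finrank_top, Module.finrank_self, finrank_euclideanSpace_fin] at h
  omega

theorem IsInscribedRegular.abs_det_le_one {δ : ℝ} {s : Fin ℓ → Euc ℓ}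
    (hs : IsInscribedRegular f c r δ s) (hc : f c = 1) (hr : 0 < r) {N : Euc ℓ →ₗ[ℝ] Euc ℓ}
    (hN : f ∘ₗ N = f) (hball : ∀ i, N (s i) ∈ hyperBall f c r) :
    |(kerRestrict hN).det| ≤ 1 ∧
      (|(kerRestrict hN).det| = 1 → N c = c ∧ ∀ x, f x = 0 → ‖N x‖ = ‖x‖) := by
  have hfN : ∀ x, f (N x) = f x := fun x => LinearMap.congr_fun hN x
  let u : Fin ℓ → LinearMap.ker f := fun i => ⟨s i - c, by simp [hs.map_eq_one, hc]⟩
  have h := abs_det_le_one_of_regular (V := LinearMap.ker f) (u := u) (δ := δ)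
    (by rw [Fintype.card_fin, finrank_ker_add_one hc]) hr hs.norm_sub
    (fun i j hij => by simpa [u, dist_eq_norm] using hs.dist_eq i j hij)
    (fun x => by
      obtain ⟨a, ha⟩ := (Submodule.mem_span_range_iff_exists_fun ℝ).1
        (hs.span_eq_top ▸ Submodule.mem_top : (x : Euc ℓ) ∈ Submodule.span ℝ (range s))
      have ha0 : ∑ i, a i = 0 := by
        have := congrArg f ha
        simpa [hs.map_eq_one, LinearMap.mem_ker.1 x.2] using this
      refine ⟨a, ha0, Subtype.ext ?_⟩
      simp [u, smul_sub, Finset.sum_sub_distrib, ← Finset.sum_smul, ha0, ha])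
    (kerRestrict hN) ⟨N c - c, by simp [hfN]⟩
    (fun i => by simpa [u, kerRestrict] using (hball i).2)
  refine ⟨h.1, fun h1 => ?_⟩
  obtain ⟨hb, hiso⟩ := h.2 h1
  refine ⟨sub_eq_zero.1 (congrArg Subtype.val hb), fun x hx => ?_⟩
  simpa [kerRestrict] using hiso ⟨x, hx⟩

/-- The ball is the unique minimal-volume ellipsoid containing an inscribed regular simplex. -/
theorem IsInscribedRegular.ddi_eq {δ : ℝ} {s : Fin ℓ → Euc ℓ}
    (hs : IsInscribedRegular f c r δ s) (hc : f c = 1) (hr : 0 < r) :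
    ddi (range s) (hyperBall f c r) = {hyperBall f c r} := by
  have haff := affineSpan_eq_of_span_eq_top hc hs.map_eq_one hs.span_eq_top
  have hdim := finrank_direction_affineSpan_eq hc haff
  have hball : ∀ i, s i ∈ hyperBall f c r := fun i => ⟨hs.map_eq_one i, (hs.norm_sub i).le⟩
  have hadm : Admissible (hyperBall f c r) (range s) (hyperBall f c r) :=
    ⟨⟨LinearMap.id, by simp⟩, range_subset_iff.2 hball, by rw [haff]; exact fun x hx => hx.1⟩
  have key : ∀ R, Admissible (hyperBall f c r) (range s) R →
      μH[(Module.finrank ℝ (LinearMap.ker f) : ℝ)] (hyperBall f c r) ≤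
        μH[(Module.finrank ℝ (LinearMap.ker f) : ℝ)] R ∧
      (μH[(Module.finrank ℝ (LinearMap.ker f) : ℝ)] R ≤
        μH[(Module.finrank ℝ (LinearMap.ker f) : ℝ)] (hyperBall f c r) →
        R = hyperBall f c r) := by
    rintro _ ⟨⟨M, rfl⟩, hsR, hR⟩
    rw [haff] at hR
    have hM : f ∘ₗ M = f := LinearMap.ext_on_range hs.span_eq_top fun i => by
      rw [hs.map_eq_one]
      exact hR ⟨s i, hball i, rfl⟩
    have hsurj : Function.Surjective M := by
      rw [← LinearMap.range_eq_top, eq_top_iff, ← hs.span_eq_top, Submodule.span_le]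
      rintro x hx
      obtain ⟨y, -, rfl⟩ := hsR hx
      exact ⟨y, rfl⟩
    let e := LinearEquiv.ofBijective M ⟨LinearMap.injective_iff_surjective.2 hsurj, hsurj⟩
    let N : Euc ℓ →ₗ[ℝ] Euc ℓ := e.symm
    have hNM : ∀ x, N (M x) = x := e.symm_apply_apply
    have hMN : ∀ x, M (N x) = x := e.apply_symm_apply
    have hfM : ∀ x, f (M x) = f x := fun x => LinearMap.congr_fun hM x
    have hN : f ∘ₗ N = f := LinearMap.ext fun x => by
      rw [LinearMap.comp_apply, ← hfM, hMN]
    obtain ⟨hle, heq⟩ := hs.abs_det_le_one hc hr hN fun i => by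
      obtain ⟨y, hy, hys⟩ := hsR (mem_range_self i)
      rwa [← hys, hNM]
    have hmul : |(kerRestrict hM).det| * |(kerRestrict hN).det| = 1 := by
      have : kerRestrict hM ∘ₗ kerRestrict hN = LinearMap.id :=
        LinearMap.ext fun x => Subtype.ext (hMN x)
      rw [← abs_mul, ← LinearMap.det_comp, this, LinearMap.det_id, abs_one]
    rw [le_image_hyperBall_measure_iff hc hr hM, image_hyperBall_measure_le_iff hc hr hM]
    refine ⟨by nlinarith [abs_nonneg (kerRestrict hM).det], fun h => ?_⟩
    obtain ⟨hNc, hiso⟩ := heq (by nlinarith [abs_nonneg (kerRestrict hN).det])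
    have hnorm : ∀ x, f x = 1 → ‖N x - c‖ = ‖x - c‖ := fun x hx => by
      rw [← hiso (x - c) (by simp [hx, hc]), map_sub, hNc]
    refine Subset.antisymm ?_ fun x hx => ⟨N x, ⟨?_, ?_⟩, hMN x⟩
    · rintro _ ⟨y, hy, rfl⟩
      have hy1 : f (M y) = 1 := by rw [hfM, hy.1]
      refine ⟨hy1, ?_⟩
      rw [← hnorm _ hy1, hNM]
      exact hy.2
    · rw [← hfM, hMN, hx.1]
    · rw [hnorm x hx.1]
      exact hx.2
  ext R
  simp only [ddi, mem_ofPred_eq, mem_singleton_iff]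
  rw [hdim]
  constructor
  · rintro ⟨hR, hmin⟩
    exact (key R hR).2 (hmin _ hadm)
  · rintro rfl
    exact ⟨hadm, fun R' hR' => (key R' hR').1⟩

/-- A nonzero functional takes a common nonzero value on the members of some orthonormal basis. -/
theorem exists_orthonormalBasis_map_eq (hℓ : ℓ ≠ 0) (hf : f ≠ 0) :
    ∃ (b : OrthonormalBasis (Fin ℓ) ℝ (Euc ℓ)) (κ : ℝ), κ ≠ 0 ∧ ∀ i, f (b i) = κ := by
  have : NeZero ℓ := ⟨hℓ⟩
  let g : Euc ℓ := (InnerProductSpace.toDual ℝ (Euc ℓ)).symm f.toContinuousLinearMap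
  have hg : ∀ x, inner ℝ g x = f x := fun x => by
    simp only [g, InnerProductSpace.toDual_symm_apply]
    rfl
  have hg0 : g ≠ 0 := fun h => hf (LinearMap.ext fun x => by simp [← hg, h])
  let e := EuclideanSpace.basisFun (Fin ℓ) ℝ
  let σ : Euc ℓ := ∑ i, e i
  have hσe : ∀ i, inner ℝ σ (e i) = 1 := fun i => by
    simp [σ, sum_inner, e.inner_eq_ite]
  have hσ0 : σ ≠ 0 := fun h => by simpa [h] using hσe 0
  let κ := ‖g‖ / ‖σ‖
  have hκ : 0 < κ := div_pos (norm_pos_iff.2 hg0) (norm_pos_iff.2 hσ0)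
  have hnorm : ‖κ • σ‖ = ‖g‖ := by
    rw [norm_smul, Real.norm_of_nonneg hκ.le, div_mul_cancel₀ _ (norm_ne_zero_iff.2 hσ0)]
  let Φ := (ℝ ∙ (κ • σ - g))ᗮ.reflection
  refine ⟨e.map Φ, κ, hκ.ne', fun i => ?_⟩
  rw [← hg, ← Submodule.reflection_sub hnorm, OrthonormalBasis.map_apply,
    LinearIsometryEquiv.inner_map_map, inner_smul_left, hσe]
  simp

theorem exists_isInscribedRegular (hℓ : 2 ≤ ℓ) (hc : f c = 1) (hr : 0 < r) :
    ∃ δ s, IsInscribedRegular f c r δ s := by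
  have hf : f ≠ 0 := fun h => by simp [h] at hc
  obtain ⟨b, κ, hκ, hb⟩ := exists_orthonormalBasis_map_eq (by omega) hf
  have hℓ2 : (2 : ℝ) ≤ ℓ := by exact_mod_cast hℓ
  have hℓ0 : (ℓ : ℝ) ≠ 0 := by positivity
  let m : Euc ℓ := (ℓ : ℝ)⁻¹ • ∑ i, b i
  have hsum : ∑ i, (b i - m) = 0 := by
    simp only [Finset.sum_sub_distrib, Finset.sum_const, Finset.card_univ, Fintype.card_fin, m,
      ← Nat.cast_smul_eq_nsmul ℝ, smul_smul, mul_inv_cancel₀ hℓ0, one_smul, sub_self]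
  have hfm : ∀ i, f (b i - m) = 0 := fun i => by
    simp [m, hb, inv_mul_cancel_left₀ hℓ0]
  have hbm : ∀ i, inner ℝ (b i) m = (ℓ : ℝ)⁻¹ := fun i => by
    simp [m, inner_smul_right, inner_sum, b.inner_eq_ite]
  have hmm : ‖m‖ ^ 2 = (ℓ : ℝ)⁻¹ := by
    rw [← real_inner_self_eq_norm_sq]
    nth_rewrite 1 [show m = (ℓ : ℝ)⁻¹ • ∑ i, b i from rfl]
    simp [inner_smul_left, sum_inner, hbm, mul_inv_cancel₀ hℓ0]
  let ρ := √(1 - (ℓ : ℝ)⁻¹)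
  have hρ : 0 < ρ := Real.sqrt_pos.2 (sub_pos.2 (inv_lt_one_of_one_lt₀ (by linarith)))
  have hnorm : ∀ i, ‖b i - m‖ = ρ := fun i => by
    rw [← Real.sqrt_sq (norm_nonneg (b i - m)), norm_sub_sq_real, hbm, hmm, b.norm_eq_one]
    congr 1
    ring
  have hdist : ∀ i j, i ≠ j → ‖b i - b j‖ = √2 := fun i j hij => by
    rw [← Real.sqrt_sq (norm_nonneg (b i - b j)), norm_sub_sq_real, b.norm_eq_one, b.norm_eq_one,
      b.inner_eq_zero hij]
    norm_num
  let t := r / ρ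
  have ht : 0 < t := div_pos hr hρ
  let s : Fin ℓ → Euc ℓ := fun i => c + t • (b i - m)
  refine ⟨t * √2, s, ⟨fun i => by simp only [s, map_add, map_smul, hfm, hc]; simp,
    fun i => ?_, fun i j hij => ?_, ?_⟩⟩
  · rw [add_sub_cancel_left, norm_smul, hnorm, Real.norm_of_nonneg ht.le,
      div_mul_cancel₀ _ hρ.ne']
  · rw [dist_add_left, dist_eq_norm, ← smul_sub, sub_sub_sub_cancel_right, norm_smul, hdist i j hij,
      Real.norm_of_nonneg ht.le]
  · set W := Submodule.span ℝ (range s)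
    have hsW : ∀ i, s i ∈ W := fun i => Submodule.subset_span (mem_range_self i)
    have hcW : c ∈ W := by
      have : (ℓ : ℝ)⁻¹ • ∑ i, s i = c := by
        simp only [s, Finset.sum_add_distrib, ← Finset.smul_sum, hsum, smul_zero, add_zero,
          Finset.sum_const, Finset.card_univ, Fintype.card_fin, ← Nat.cast_smul_eq_nsmul ℝ,
          smul_smul, inv_mul_cancel₀ hℓ0, one_smul]
      exact this ▸ W.smul_mem _ (W.sum_mem fun i _ => hsW i)
    have hbW : ∀ i, b i - m ∈ W := fun i => by
      have : t⁻¹ • (s i - c) = b i - m := by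
        simp only [s, add_sub_cancel_left, smul_smul, inv_mul_cancel₀ ht.ne', one_smul]
      exact this ▸ W.smul_mem _ (W.sub_mem (hsW i) hcW)
    refine eq_top_iff.2 fun x _ => ?_
    have hy : x - f x • c ∈ W := by
      set y := x - f x • c with hydef
      have hfy : f y = 0 := by simp [hydef, hc]
      have hrepr := b.sum_repr' y
      have h0 : ∑ i, inner ℝ (b i) y = 0 := by
        have := congrArg f hrepr
        simp only [map_sum, map_smul, hb, hfy, smul_eq_mul, ← Finset.sum_mul] at this
        exact (mul_eq_zero.1 this).resolve_right hκ
      have : ∑ i, inner ℝ (b i) y • (b i - m) = y := by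
        simp only [smul_sub, Finset.sum_sub_distrib, ← Finset.sum_smul, h0, zero_smul, sub_zero,
          hrepr]
      exact this ▸ W.sum_mem fun i _ => W.smul_mem _ (hbW i)
    simpa using W.add_mem hy (W.smul_mem (f x) hcW)

theorem affineSpan_eq_of_ddi_eq (hc : f c = 1) (hr : 0 < r) {X : Set (Euc ℓ)}
    (hX : X ⊆ hyperBall f c r) (h : ddi X (hyperBall f c r) = {hyperBall f c r}) :
    (affineSpan ℝ X : Set (Euc ℓ)) = {x | f x = 1} := by
  have hmem : hyperBall f c r ∈ ddi X (hyperBall f c r) := h ▸ mem_singleton _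
  exact affineSpan_eq_of_hyperBall_subset hc hr hX hmem.1.2.2

theorem IsInscribedRegular.injective {δ : ℝ} {s : Fin ℓ → Euc ℓ}
    (hs : IsInscribedRegular f c r δ s) : Function.Injective s :=
  (linearIndependent_of_top_le_span_of_card_eq_finrank hs.span_eq_top.ge (by simp)).injective

end Hyperplane

theorem stmt_8 {ℓ : ℕ} (hℓ : 2 ≤ ℓ) (f : Euc ℓ →ₗ[ℝ] ℝ) (hf : f ≠ 0)
    (c : Euc ℓ) (hc : f c = 1) (r : ℝ) (hr : 0 < r)
    (𝕊 : Set (Euc ℓ)) (h𝕊 : 𝕊 = {a | f a = 1 ∧ ‖a - c‖ ≤ r})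
    (S : Set (Euc ℓ)) (hsub : S ⊆ 𝕊) (hfin : S.Finite) (hne : S.Nonempty) :
    (S.ncard = ℓ ∧ (∀ a ∈ S, ‖a - c‖ = r) ∧
      (∃ δ : ℝ, ∀ a ∈ S, ∀ b ∈ S, a ≠ b → dist a b = δ) ∧
      (affineSpan ℝ S : Set (Euc ℓ)) = {x | f x = 1}) ↔
    (ddi S 𝕊 = {𝕊} ∧
      ∀ S' ⊆ 𝕊, ddi S' 𝕊 = {𝕊} → Cardinal.mk ↥S ≤ Cardinal.mk ↥S') := by
  obtain rfl : 𝕊 = hyperBall f c r := h𝕊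
  have hmk : Cardinal.mk S = S.ncard := (Set.cast_ncard hfin).symm
  have hcard : ∀ X ⊆ hyperBall f c r, ddi X (hyperBall f c r) = {hyperBall f c r} →
      (ℓ : Cardinal) ≤ Cardinal.mk X := fun X hX hd => by
    have h := rank_span_le (R := ℝ) X
    rwa [span_eq_top_of_affineSpan_eq hc (affineSpan_eq_of_ddi_eq hc hr hX hd), rank_top,
      rank_eq_card_basis (EuclideanSpace.basisFun (Fin ℓ) ℝ).toBasis, Fintype.card_fin] at h
  have henum : S.ncard = ℓ → ∃ s : Fin ℓ → Euc ℓ, Function.Injective s ∧ range s = S := by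
    intro h
    have : Finite S := hfin
    let e := (Finite.equivFinOfCardEq (α := S) (n := ℓ) h).symm
    exact ⟨fun i => e i, Subtype.val_injective.comp e.injective, by
      rw [show (fun i => (e i : Euc ℓ)) = Subtype.val ∘ e from rfl, e.surjective.range_comp,
        Subtype.range_coe]⟩
  constructor
  · rintro ⟨hn, hnorm, ⟨δ, hδ⟩, haff⟩
    obtain ⟨s, hinj, rfl⟩ := henum hn
    have hs : IsInscribedRegular f c r δ s :=
      { map_eq_one := fun i => (hsub (mem_range_self i)).1
        norm_sub := fun i => hnorm _ (mem_range_self i)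
        dist_eq := fun i j hij => hδ _ (mem_range_self i) _ (mem_range_self j) (hinj.ne hij)
        span_eq_top := span_eq_top_of_affineSpan_eq hc haff }
    refine ⟨hs.ddi_eq hc hr, fun S' hS' hd => ?_⟩
    rw [hmk, hn]
    exact hcard S' hS' hd
  · rintro ⟨hddi, hmin⟩
    have haff := affineSpan_eq_of_ddi_eq hc hr hsub hddi
    obtain ⟨δ, s₀, hs₀⟩ := exists_isInscribedRegular (f := f) (c := c) hℓ hc hr
    have hball₀ : range s₀ ⊆ hyperBall f c r :=
      range_subset_iff.2 fun i => ⟨hs₀.map_eq_one i, (hs₀.norm_sub i).le⟩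
    have hn : S.ncard = ℓ := by
      have h1 := hcard S hsub hddi
      have h2 := hmin _ hball₀ (hs₀.ddi_eq hc hr)
      have h3 : Cardinal.mk (range s₀) = ℓ := by
        simpa using Cardinal.mk_range_eq_of_injective hs₀.injective
      rw [h3] at h2
      rw [hmk] at h1 h2
      exact le_antisymm (by exact_mod_cast h2) (by exact_mod_cast h1)
    obtain ⟨s, hinj, rfl⟩ := henum hn
    have hf1 : ∀ i, f (s i) = 1 := fun i => (hsub (mem_range_self i)).1
    let b := basisOfTopLeSpanOfCardEqFinrank s₀ hs₀.span_eq_top.ge (by simp)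
    let M : Euc ℓ →ₗ[ℝ] Euc ℓ := b.constr ℝ s
    have hMs : ∀ i, M (s₀ i) = s i := fun i => by
      have := b.constr_basis ℝ s i
      rwa [coe_basisOfTopLeSpanOfCardEqFinrank] at this
    have hM : f ∘ₗ M = f := LinearMap.ext_on_range hs₀.span_eq_top fun i => by
      rw [LinearMap.comp_apply, hMs, hf1, hs₀.map_eq_one]
    have hfM : ∀ x, f (M x) = f x := fun x => LinearMap.congr_fun hM x
    obtain ⟨hle, heq⟩ := hs₀.abs_det_le_one hc hr hM fun i => by
      rw [hMs]
      exact hsub (mem_range_self i)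
    have hvol := (image_hyperBall_measure_le_iff hc hr hM).2 hle
    have hself : hyperBall f c r ∈ ddi (range s) (hyperBall f c r) := hddi ▸ mem_singleton _
    have hdim := finrank_direction_affineSpan_eq hc haff
    have hmem : M '' hyperBall f c r ∈ ddi (range s) (hyperBall f c r) := by
      refine ⟨⟨⟨M, rfl⟩, ?_, ?_⟩, fun R hR => le_trans ?_ (hself.2 R hR)⟩
      · exact range_subset_iff.2 fun i => ⟨s₀ i, hball₀ (mem_range_self i), hMs i⟩
      · rw [haff]
        rintro _ ⟨y, hy, rfl⟩
        exact (hfM y).trans hy.1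
      · rwa [hdim]
    rw [hddi, mem_singleton_iff] at hmem
    obtain ⟨hMc, hiso⟩ := heq (hle.antisymm
      ((le_image_hyperBall_measure_iff hc hr hM).1 (by rw [hmem])))
    refine ⟨hn, ?_, ⟨δ, ?_⟩, haff⟩
    · rintro _ ⟨i, rfl⟩
      rw [← hs₀.norm_sub i, ← hiso (s₀ i - c) (by simp [hs₀.map_eq_one, hc]), map_sub, hMs, hMc]
    · rintro _ ⟨i, rfl⟩ _ ⟨j, rfl⟩ hij
      rw [← hs₀.dist_eq i j fun h => hij (by rw [h]), dist_eq_norm, dist_eq_norm,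
        ← hiso (s₀ i - s₀ j) (by simp [hs₀.map_eq_one]), map_sub, hMs, hMs]
end
end

section
/- Let d ≥ 1 and let S ⊆ ℝ^d be the vertex set of a regular d-simplex inscribed in the unit sphere, i.e., S consists of d + 1 points of Euclidean norm 1 with all pairwise distances equal, whose affine span is ℝ^d. Then every ellipsoid E ⊆ ℝ^d containing S has Lebesgue measure at least that of the closed unit ball B, with equality if and only if E = B. In other words, the closed unit ball is the unique minimum-volume enclosing ellipsoid of S. -/
open MeasureTheory Metric Set

noncomputable section

/-- An ellipsoid in `ℝ^d`: the image of the closed unit ball under an invertible affine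
transformation. -/
def IsEllipsoid {d : ℕ} (E : Set (Euc d)) : Prop :=
  ∃ F : Euc d ≃ᵃ[ℝ] Euc d, E = F '' closedBall 0 1

open scoped RealInnerProductSpace

section RegularSimplex

variable {V : Type*} [NormedAddCommGroup V] [InnerProductSpace ℝ V]

/-- A vector whose inner product is constant on an affinely spanning set vanishes. -/
theorem eq_zero_of_inner_eq_const {S : Set V} (hspan : affineSpan ℝ S = ⊤) {s : V} {c : ℝ}
    (h : ∀ a ∈ S, ⟪s, a⟫ = c) : s = 0 := by
  have hv : vectorSpan ℝ S = ⊤ := by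
    rw [← direction_affineSpan, hspan, AffineSubspace.direction_top]
  have hle : vectorSpan ℝ S ≤ (innerₛₗ ℝ s).ker := by
    refine Submodule.span_le.2 ?_
    rintro _ ⟨a, ha, b, hb, rfl⟩
    simp [inner_sub_right, h a ha, h b hb]
  have hs : s ∈ (innerₛₗ ℝ s).ker := hle (hv ▸ Submodule.mem_top)
  simpa using hs

/-- The linear span of an affinely spanning set is everything. -/
theorem span_eq_top_of_affineSpan_eq_top {S : Set V} (hspan : affineSpan ℝ S = ⊤) :
    Submodule.span ℝ S = ⊤ := by
  rw [eq_top_iff, ← AffineSubspace.direction_top ℝ V V, ← hspan, direction_affineSpan]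
  refine Submodule.span_le.2 ?_
  rintro _ ⟨a, ha, b, hb, rfl⟩
  exact sub_mem (Submodule.subset_span ha) (Submodule.subset_span hb)

variable {t : Finset V} {n : ℕ} {c : ℝ}

theorem sum_inner_smul_of_equiangular (hnorm : ∀ a ∈ t, ‖a‖ = 1)
    (hinner : ∀ a ∈ t, ∀ b ∈ t, a ≠ b → ⟪a, b⟫ = c) {a : V} (ha : a ∈ t) :
    ∑ b ∈ t, ⟪b, a⟫ • b = (1 - c) • a + c • ∑ b ∈ t, b := by
  classical
  rw [← Finset.add_sum_erase t _ ha, ← Finset.add_sum_erase t (fun b => b) ha,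
    real_inner_self_eq_norm_sq, hnorm a ha,
    Finset.sum_congr rfl fun b hb => by
      rw [hinner b (Finset.mem_of_mem_erase hb) a ha (Finset.ne_of_mem_erase hb)],
    ← Finset.smul_sum]
  module

theorem inner_sum_of_equiangular (hcard : t.card = n + 1) (hnorm : ∀ a ∈ t, ‖a‖ = 1)
    (hinner : ∀ a ∈ t, ∀ b ∈ t, a ≠ b → ⟪a, b⟫ = c) {a : V} (ha : a ∈ t) :
    ⟪∑ b ∈ t, b, a⟫ = 1 + n * c := by
  classical
  rw [sum_inner, ← Finset.add_sum_erase t _ ha, real_inner_self_eq_norm_sq, hnorm a ha,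
    Finset.sum_congr rfl fun b hb =>
      hinner b (Finset.mem_of_mem_erase hb) a ha (Finset.ne_of_mem_erase hb)]
  simp [Finset.card_erase_of_mem ha, hcard]

/-- The centroid of a spanning equiangular set of unit vectors is the origin. -/
theorem sum_eq_zero_of_equiangular (hcard : t.card = n + 1) (hnorm : ∀ a ∈ t, ‖a‖ = 1)
    (hinner : ∀ a ∈ t, ∀ b ∈ t, a ≠ b → ⟪a, b⟫ = c) (hspan : affineSpan ℝ (t : Set V) = ⊤) :
    ∑ b ∈ t, b = 0 :=
  eq_zero_of_inner_eq_const hspan fun _ ha => inner_sum_of_equiangular hcard hnorm hinner ha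

/-- The vertices of a regular simplex form a tight frame. -/
theorem sum_inner_smul_eq_of_equiangular (hcard : t.card = n + 1) (hnorm : ∀ a ∈ t, ‖a‖ = 1)
    (hinner : ∀ a ∈ t, ∀ b ∈ t, a ≠ b → ⟪a, b⟫ = c) (hspan : affineSpan ℝ (t : Set V) = ⊤)
    (x : V) : (n : ℝ) • ∑ b ∈ t, ⟪b, x⟫ • b = ((n : ℝ) + 1) • x := by
  have h0 := sum_eq_zero_of_equiangular hcard hnorm hinner hspan
  have hx : x ∈ Submodule.span ℝ (t : Set V) :=
    span_eq_top_of_affineSpan_eq_top hspan ▸ Submodule.mem_top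
  induction hx using Submodule.span_induction with
  | mem a ha =>
    have hc := inner_sum_of_equiangular hcard hnorm hinner ha
    rw [h0, inner_zero_left] at hc
    rw [sum_inner_smul_of_equiangular hnorm hinner ha, h0, smul_zero, add_zero, smul_smul]
    congr 1
    linarith
  | zero => simp
  | add x y _ _ hx hy =>
    simp only [inner_add_right, add_smul, Finset.sum_add_distrib, smul_add] at *
    rw [hx, hy]
  | smul r x _ hx =>
    simp only [inner_smul_right, mul_smul, ← Finset.smul_sum]
    rw [smul_comm, hx, smul_comm]

/-- Traces are computed by averaging the quadratic form over the vertices of a regular simplex. -/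
theorem sum_inner_apply_eq_trace_of_equiangular [FiniteDimensional ℝ V] (hcard : t.card = n + 1)
    (hnorm : ∀ a ∈ t, ‖a‖ = 1) (hinner : ∀ a ∈ t, ∀ b ∈ t, a ≠ b → ⟪a, b⟫ = c)
    (hspan : affineSpan ℝ (t : Set V) = ⊤) (T : V →ₗ[ℝ] V) :
    n * ∑ a ∈ t, ⟪a, T a⟫ = (n + 1) * T.trace ℝ V := by
  let e := stdOrthonormalBasis ℝ V
  rw [T.trace_eq_sum_inner e, Finset.mul_sum Finset.univ]
  have h (i) : ((n : ℝ) + 1) * ⟪e i, T (e i)⟫ =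
      n * ∑ a ∈ t, ⟪T.adjoint a, e i⟫ * ⟪e i, a⟫ := by
    rw [← inner_smul_right,
      ← sum_inner_smul_eq_of_equiangular hcard hnorm hinner hspan (T (e i)), inner_smul_right,
      inner_sum]
    simp only [inner_smul_right, LinearMap.adjoint_inner_left]
  rw [Finset.sum_congr rfl fun i _ => h i, ← Finset.mul_sum, Finset.sum_comm]
  simp only [OrthonormalBasis.sum_inner_mul_inner]
  simp only [LinearMap.adjoint_inner_left]

end RegularSimplex

section TraceDet

variable {V : Type*} [NormedAddCommGroup V] [InnerProductSpace ℝ V] [FiniteDimensional ℝ V]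

/-- If `A† A` has trace at most the dimension, then `|det A| ≤ 1`, with equality only for
isometries. -/
theorem abs_det_le_one_of_trace_adjoint_comp_self_le {A : V →ₗ[ℝ] V}
    (hA : Function.Injective A)
    (htr : (A.adjoint ∘ₗ A).trace ℝ V ≤ Module.finrank ℝ V) :
    |A.det| ≤ 1 ∧ (|A.det| = 1 → A.adjoint ∘ₗ A = LinearMap.id) := by
  set T := A.adjoint ∘ₗ A with hTdef
  have hT : T.IsSymmetric := (A.isPositive_adjoint_comp_self).isSymmetric
  let b := hT.eigenvectorBasis rfl
  let l := hT.eigenvalues rfl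
  have hdet : |A.det| ^ 2 = ∏ i, l i := by
    rw [← A.normDet_eq_abs_det]
    exact A.normDet_sq.trans (hT.det_eq_prod_eigenvalues rfl)
  have htrace : T.trace ℝ V = ∑ i, l i := hT.trace_eq_sum_eigenvalues rfl
  have hpos (i) : 0 < l i := by
    have h1 : ⟪b i, T (b i)⟫ = l i := by
      have : T (b i) = l i • b i := hT.apply_eigenvectorBasis rfl i
      rw [this, inner_smul_right, real_inner_self_eq_norm_sq, b.norm_eq_one]; simp
    rw [← h1, hTdef, LinearMap.comp_apply, LinearMap.adjoint_inner_right]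
    refine real_inner_self_pos.2 fun h => ?_
    exact b.orthonormal.ne_zero i (hA (h.trans (map_zero A).symm))
  have hlog : Real.log (∏ i, l i) = ∑ i, Real.log (l i) :=
    Real.log_prod fun i _ => (hpos i).ne'
  have hle (i) : Real.log (l i) ≤ l i - 1 := Real.log_le_sub_one_of_pos (hpos i)
  have hsum : ∑ i, (l i - 1) ≤ 0 := by
    rw [Finset.sum_sub_distrib, ← htrace]; simpa using htr
  have hprod : 0 < ∏ i, l i := Finset.prod_pos fun i _ => hpos i
  refine ⟨?_, fun h => ?_⟩
  · have : Real.log (∏ i, l i) ≤ 0 := hlog ▸ (Finset.sum_le_sum fun i _ => hle i).trans hsum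
    rw [Real.log_nonpos_iff hprod.le, ← hdet] at this
    exact (sq_le_one_iff₀ (abs_nonneg _)).1 this
  · rw [h, one_pow] at hdet
    rw [← hdet, Real.log_one] at hlog
    have hl : ∀ i ∈ Finset.univ, l i - 1 - Real.log (l i) = 0 := by
      refine (Finset.sum_eq_zero_iff_of_nonneg fun i _ => sub_nonneg.2 (hle i)).1 ?_
      refine le_antisymm ?_ (Finset.sum_nonneg fun i _ => sub_nonneg.2 (hle i))
      rw [Finset.sum_sub_distrib, ← hlog, sub_zero]
      exact hsum
    refine b.toBasis.ext fun i => ?_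
    have hi : l i = 1 := by
      by_contra hne
      linarith [Real.log_lt_sub_one_of_pos (hpos i) hne, hl i (Finset.mem_univ i)]
    have : T (b i) = l i • b i := hT.apply_eigenvectorBasis rfl i
    simp [this, hi]

end TraceDet

/-- An affine map sending the vertices of a regular simplex inscribed in the unit sphere into the
unit ball does not increase volume, and if it preserves volume it is a linear isometry. -/
theorem abs_det_le_one_of_norm_apply_add_le {V : Type*} [NormedAddCommGroup V]
    [InnerProductSpace ℝ V] [FiniteDimensional ℝ V] {t : Finset V} {c : ℝ}
    (hdim : 1 ≤ Module.finrank ℝ V)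
    (hcard : t.card = Module.finrank ℝ V + 1) (hnorm : ∀ a ∈ t, ‖a‖ = 1)
    (hinner : ∀ a ∈ t, ∀ b ∈ t, a ≠ b → ⟪a, b⟫ = c) (hspan : affineSpan ℝ (t : Set V) = ⊤)
    {A : V →ₗ[ℝ] V} (hA : Function.Injective A) {v : V} (hv : ∀ a ∈ t, ‖A a + v‖ ≤ 1) :
    |A.det| ≤ 1 ∧ (|A.det| = 1 → v = 0 ∧ ∀ x, ‖A x‖ = ‖x‖) := by
  set n := Module.finrank ℝ V
  set T := A.adjoint ∘ₗ A with hT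
  have hn : (1 : ℝ) ≤ n := mod_cast hdim
  have hsq (x : V) : ⟪x, T x⟫ = ‖A x‖ ^ 2 := by
    rw [hT, LinearMap.comp_apply, LinearMap.adjoint_inner_right, real_inner_self_eq_norm_sq]
  have htr := sum_inner_apply_eq_trace_of_equiangular hcard hnorm hinner hspan T
  have hsum : ∑ a ∈ t, ‖A a + v‖ ^ 2 = ∑ a ∈ t, ⟪a, T a⟫ + (n + 1) * ‖v‖ ^ 2 := by
    have hz : ∑ a ∈ t, ⟪A a, v⟫ = 0 := by
      rw [← sum_inner, ← map_sum, sum_eq_zero_of_equiangular hcard hnorm hinner hspan, map_zero,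
        inner_zero_left]
    simp only [norm_add_sq_real, Finset.sum_add_distrib, ← Finset.mul_sum, hz, hsq]
    simp [hcard]
  have hle : ∑ a ∈ t, ‖A a + v‖ ^ 2 ≤ n + 1 := by
    refine (Finset.sum_le_sum fun a ha => pow_le_one₀ (norm_nonneg _) (hv a ha)).trans ?_
    simp [hcard]
  have hbound : T.trace ℝ V + n * ‖v‖ ^ 2 ≤ n := by
    have h1 : ((n : ℝ) + 1) * (T.trace ℝ V + n * ‖v‖ ^ 2) ≤ (n + 1) * n := by
      calc _ = n * ∑ a ∈ t, ‖A a + v‖ ^ 2 := by rw [hsum, mul_add, mul_add, htr]; ring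
        _ ≤ n * (n + 1) := by gcongr
        _ = _ := mul_comm _ _
    exact le_of_mul_le_mul_left h1 (by positivity)
  have key := abs_det_le_one_of_trace_adjoint_comp_self_le hA
    ((le_add_of_nonneg_right (by positivity)).trans hbound)
  refine ⟨key.1, fun h => ?_⟩
  have hid : T = LinearMap.id := key.2 h
  refine ⟨?_, fun x => ?_⟩
  · rw [hid, LinearMap.trace_id] at hbound
    have : ‖v‖ ^ 2 ≤ 0 := by nlinarith [sq_nonneg ‖v‖]
    simpa using le_antisymm this (sq_nonneg _)
  · have := hsq x
    rw [hid, LinearMap.id_apply, real_inner_self_eq_norm_sq] at this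
    exact ((sq_eq_sq₀ (norm_nonneg _) (norm_nonneg _)).1 this).symm

theorem addHaar_image_affineEquiv {V : Type*} [NormedAddCommGroup V] [NormedSpace ℝ V]
    [MeasurableSpace V] [BorelSpace V] [FiniteDimensional ℝ V] (μ : Measure V)
    [μ.IsAddHaarMeasure] (F : V ≃ᵃ[ℝ] V) (s : Set V) :
    μ (F '' s) = ENNReal.ofReal |(F.linear : V →ₗ[ℝ] V).det| * μ s := by
  have h : F '' s = (fun x => x + F 0) '' ((F.linear : V →ₗ[ℝ] V) '' s) := by
    rw [Set.image_image]
    refine Set.image_congr fun x _ => ?_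
    simpa using F.map_vadd 0 x
  rw [h, Set.image_add_right, measure_preimage_add_right, Measure.addHaar_image_linearMap]

theorem stmt_9 {d : ℕ} (hd : 1 ≤ d) (S : Set (Euc d))
    (hcard : S.ncard = d + 1) (hnorm : ∀ a ∈ S, ‖a‖ = 1)
    (hequi : ∃ δ : ℝ, ∀ a ∈ S, ∀ b ∈ S, a ≠ b → dist a b = δ)
    (hspan : affineSpan ℝ S = ⊤) :
    ∀ E : Set (Euc d), IsEllipsoid E → S ⊆ E →
      volume (closedBall (0 : Euc d) 1) ≤ volume E ∧
      (volume E = volume (closedBall (0 : Euc d) 1) ↔ E = closedBall (0 : Euc d) 1) := by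
  rintro E ⟨F, rfl⟩ hSE
  obtain ⟨δ, hδ⟩ := hequi
  have hfin : S.Finite := Set.finite_of_ncard_ne_zero (by omega)
  lift S to Finset (Euc d) using hfin
  rw [Set.ncard_coe_finset] at hcard
  have hinner : ∀ a ∈ S, ∀ b ∈ S, a ≠ b → ⟪a, b⟫ = 1 - δ ^ 2 / 2 := by
    intro a ha b hb hab
    have h := norm_sub_sq_real a b
    rw [← dist_eq_norm, hδ a ha b hb hab, hnorm a ha, hnorm b hb] at h
    linarith
  let A : Euc d ≃ₗ[ℝ] Euc d := F.linear.symm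
  have hF (x : Euc d) : F.symm x = A x + F.symm 0 := by
    simpa [A] using F.symm.map_vadd 0 x
  have hmem (x : Euc d) : x ∈ F '' closedBall 0 1 ↔ ‖A x + F.symm 0‖ ≤ 1 := by
    rw [← hF, ← mem_closedBall_zero_iff]
    exact ⟨fun ⟨y, hy, h⟩ => by simpa [← h] using hy, fun h => ⟨_, h, F.apply_symm_apply x⟩⟩
  have key := abs_det_le_one_of_norm_apply_add_le (A := (A : Euc d →ₗ[ℝ] Euc d)) (by simpa)
    (by simpa using hcard) hnorm hinner hspan A.injective fun a ha => (hmem a).1 (hSE ha)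
  have hmul : |(F.linear : Euc d →ₗ[ℝ] Euc d).det| * |(A : Euc d →ₗ[ℝ] Euc d).det| = 1 := by
    rw [← abs_mul, show A = F.linear.symm from rfl, LinearEquiv.det_mul_det_symm, abs_one]
  have hvol := addHaar_image_affineEquiv volume F (closedBall 0 1)
  have hB0 : volume (closedBall (0 : Euc d) 1) ≠ 0 := (measure_closedBall_pos _ _ one_pos).ne'
  have hBtop : volume (closedBall (0 : Euc d) 1) ≠ ⊤ := measure_closedBall_lt_top.ne
  refine ⟨?_, fun h => ?_, fun h => by rw [h]⟩
  · rw [hvol]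
    refine le_mul_of_one_le_left' (ENNReal.one_le_ofReal.2 ?_)
    nlinarith [key.1, abs_nonneg (F.linear : Euc d →ₗ[ℝ] Euc d).det]
  · rw [hvol, ENNReal.mul_eq_right hB0 hBtop, ENNReal.ofReal_eq_one] at h
    rw [h, one_mul] at hmul
    obtain ⟨h0, hiso⟩ := key.2 hmul
    ext x
    rw [hmem, h0, add_zero, mem_closedBall_zero_iff]
    exact (hiso x).symm ▸ Iff.rfl
end
end

section
/- Let d ≥ 1 and let S ⊆ ℝ^d be the vertex set of a d-simplex inscribed in the unit sphere, i.e., S consists of d + 1 affinely independent points of Euclidean norm 1, and suppose the simplex is not regular (not all pairwise distances between points of S are equal). Then there exists an ellipsoid E ⊆ ℝ^d containing S whose Lebesgue measure is strictly smaller than that of the closed unit ball; in particular the minimum-volume enclosing ellipsoid of S is not the closed unit ball. -/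
open MeasureTheory Metric Set

noncomputable section

open Matrix

open scoped MatrixOrder in
theorem Matrix.PosSemidef.exists_eq_transpose_mul_self {n : Type*} [Fintype n]
    {M : Matrix n n ℝ} (hM : M.PosSemidef) : ∃ B : Matrix n n ℝ, M = Bᵀ * B := by
  classical
  obtain ⟨B, hB⟩ := CStarAlgebra.nonneg_iff_eq_star_mul_self.mp hM.nonneg
  exact ⟨B, by simpa [Matrix.star_eq_conjTranspose] using hB⟩

/-- A positive definite matrix whose trace is at most its size has determinant less than one,
unless it is the identity (the equality case of the AM-GM inequality for eigenvalues). -/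
theorem Matrix.PosDef.det_lt_one_of_trace_le {n : Type*} [Fintype n] [DecidableEq n]
    {M : Matrix n n ℝ} (hM : M.PosDef) (htr : M.trace ≤ Fintype.card n) (hne : M ≠ 1) :
    M.det < 1 := by
  have hpos := hM.eigenvalues_pos
  have hex : ∃ i, hM.1.eigenvalues i ≠ 1 := by
    by_contra! h
    apply hne
    rw [hM.1.spectral_theorem]
    have : (RCLike.ofReal ∘ hM.1.eigenvalues : n → ℝ) = 1 := by
      funext i
      simp [h i]
    rw [this]
    simp
  obtain ⟨i, hi⟩ := hex
  have hsum : ∑ j, Real.log (hM.1.eigenvalues j) < ∑ j, (hM.1.eigenvalues j - 1) :=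
    Finset.sum_lt_sum (fun j _ => Real.log_le_sub_one_of_pos (hpos j))
      ⟨i, Finset.mem_univ i, Real.log_lt_sub_one_of_pos (hpos i) hi⟩
  have htr' : M.trace = ∑ j, hM.1.eigenvalues j := by
    simpa using hM.1.trace_eq_sum_eigenvalues
  have hdet : M.det = ∏ j, hM.1.eigenvalues j := by
    simpa using hM.1.det_eq_prod_eigenvalues
  rw [← Real.log_prod fun j _ => (hpos j).ne', ← hdet, Finset.sum_sub_distrib, ← htr'] at hsum
  simp only [Finset.sum_const, Finset.card_univ, nsmul_eq_mul, mul_one] at hsum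
  exact (Real.log_neg_iff hM.det_pos).mp (by linarith)

/-- If the rows of `W` are independent, one fewer than its columns, and each have zero sum,
then the orthogonal projection onto the row space of `W` is the projection along the all-ones
vector. -/
theorem Matrix.transpose_mul_inv_mul_eq_one_sub {m n : Type*} [Fintype m] [Fintype n]
    [DecidableEq m] [DecidableEq n] (hcard : Fintype.card n = Fintype.card m + 1)
    (W : Matrix m n ℝ) (hW : IsUnit (W * Wᵀ).det) (hsum : ∀ a, ∑ i, W a i = 0) :
    Wᵀ * (W * Wᵀ)⁻¹ * W = 1 - ((Fintype.card n : ℝ)⁻¹) • Matrix.of fun _ _ => 1 := by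
  set J : Matrix n n ℝ := Matrix.of fun _ _ => 1 with hJ
  set k : ℝ := ((Fintype.card n : ℕ) : ℝ) with hk
  have hk0 : k ≠ 0 := by rw [hk, hcard]; positivity
  set P := Wᵀ * (W * Wᵀ)⁻¹ * W with hP
  have hWJ : W * J = 0 := by
    ext a i
    simp [Matrix.mul_apply, hJ, hsum]
  have hJt : Jᵀ = J := by ext; simp [hJ]
  have hPt : Pᵀ = P := by
    simp [hP, Matrix.transpose_mul, Matrix.transpose_nonsing_inv, Matrix.mul_assoc]
  have hPJ : P * J = 0 := by rw [hP, Matrix.mul_assoc, hWJ, Matrix.mul_zero]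
  have hJP : J * P = 0 := by
    have := congrArg Matrix.transpose hPJ
    rwa [Matrix.transpose_mul, hPt, hJt, Matrix.transpose_zero] at this
  have hJJ : J * J = k • J := by
    ext i j
    simp [Matrix.mul_apply, hJ, hk]
  have hPP : P * P = P := by
    calc P * P = Wᵀ * ((W * Wᵀ)⁻¹ * (W * Wᵀ)) * (W * Wᵀ)⁻¹ * W := by
          simp only [hP, Matrix.mul_assoc]
      _ = P := by rw [Matrix.nonsing_inv_mul _ hW, Matrix.mul_one]
  have htrP : P.trace = Fintype.card m := by
    rw [hP, Matrix.trace_mul_comm, ← Matrix.mul_assoc, Matrix.mul_nonsing_inv _ hW,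
      Matrix.trace_one]
  have htrJ : J.trace = k := by simp [hJ, Matrix.trace, hk]
  set R := 1 - P - k⁻¹ • J with hR
  have hRR : Rᴴ * R = R := by
    rw [Matrix.conjTranspose_eq_transpose_of_trivial]
    simp only [hR, Matrix.transpose_sub, Matrix.transpose_one, Matrix.transpose_smul, hPt, hJt,
      Matrix.sub_mul, Matrix.mul_sub, Matrix.one_mul, Matrix.mul_one, Matrix.smul_mul,
      Matrix.mul_smul, hPP, hPJ, hJP, hJJ, smul_smul, inv_mul_cancel₀ hk0, smul_zero]
    simp
  have htrR : R.trace = 0 := by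
    simp only [hR, Matrix.trace_sub, Matrix.trace_smul, Matrix.trace_one, htrP, htrJ, smul_eq_mul,
      inv_mul_cancel₀ hk0, hcard]
    push_cast
    ring
  have hR0 : R = 0 := by
    rw [← hRR] at htrR
    exact Matrix.trace_conjTranspose_mul_self_eq_zero_iff.mp htrR
  rw [hR, sub_right_comm, sub_eq_zero] at hR0
  exact hR0.symm

/-- The ellipsoid `b + A B`, with `B` the closed unit ball, has volume less than that of the unit
ball as soon as `0 < |det A| < 1`. -/
theorem isEllipsoid_and_volume_lt_of_abs_det_lt_one {d : ℕ}
    (A : Matrix (Fin d) (Fin d) ℝ) (b : Euc d)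
    (h0 : A.det ≠ 0) (h1 : |A.det| < 1) :
    IsEllipsoid ((fun x => b + Matrix.toEuclideanLin A x) '' closedBall (0 : Euc d) 1) ∧
      volume ((fun x => b + Matrix.toEuclideanLin A x) '' closedBall (0 : Euc d) 1) <
        volume (closedBall (0 : Euc d) 1) := by
  have hdet : LinearMap.det (Matrix.toEuclideanLin A) = A.det := LinearMap.det_toLpLin 2 A
  constructor
  · let L := LinearMap.equivOfDetNeZero (Matrix.toEuclideanLin A) (hdet ▸ h0)
    exact ⟨L.toAffineEquiv.trans (AffineEquiv.constVAdd ℝ (Euc d) b), rfl⟩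
  · have himg : (fun x => b + Matrix.toEuclideanLin A x) '' closedBall (0 : Euc d) 1 =
        (fun x => b + x) '' (Matrix.toEuclideanLin A '' closedBall (0 : Euc d) 1) := by
      rw [Set.image_image]
    rw [himg, Set.image_add_left, measure_preimage_add, Measure.addHaar_image_linearMap, hdet]
    have hpos : volume (closedBall (0 : Euc d) 1) ≠ 0 :=
      (measure_closedBall_pos volume _ one_pos).ne'
    have hfin : volume (closedBall (0 : Euc d) 1) ≠ ⊤ := measure_closedBall_lt_top.ne
    calc _ < 1 * volume (closedBall (0 : Euc d) 1) := by
          refine (ENNReal.mul_lt_mul_iff_left hpos hfin).mpr ?_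
          exact ENNReal.ofReal_lt_one.mpr h1
      _ = _ := one_mul _

/-- The matrix whose columns are the points `v i` relative to their centroid. -/
def centeredMatrix {d : ℕ} (v : Fin (d + 1) → Euc d) : Matrix (Fin d) (Fin (d + 1)) ℝ :=
  Matrix.of fun a i => v i a - (∑ j, v j a) / (d + 1)

theorem sum_centeredMatrix {d : ℕ} (v : Fin (d + 1) → Euc d) (a : Fin d) :
    ∑ i, centeredMatrix v a i = 0 := by
  have : (d + 1 : ℝ) ≠ 0 := by positivity
  simp only [centeredMatrix, Matrix.of_apply, Finset.sum_sub_distrib, Finset.sum_const,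
    Finset.card_univ, Fintype.card_fin, nsmul_eq_mul]
  push_cast
  field_simp
  ring

theorem posDef_centeredMatrix_mul_transpose {d : ℕ} {v : Fin (d + 1) → Euc d}
    (hai : AffineIndependent ℝ v) :
    (centeredMatrix v * (centeredMatrix v)ᵀ).PosDef := by
  rw [← Matrix.conjTranspose_eq_transpose_of_trivial]
  refine Matrix.PosDef.mul_conjTranspose_self _ ?_
  refine (injective_iff_map_eq_zero (centeredMatrix v).vecMulLinear).mpr fun x hx => ?_
  have horth : ∀ i j, inner ℝ (WithLp.toLp 2 x : Euc d) (v i - v j) = 0 := by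
    intro i j
    have hi := congrFun hx i
    have hj := congrFun hx j
    simp only [Matrix.vecMulLinear_apply, Matrix.vecMul, dotProduct, centeredMatrix,
      Matrix.of_apply, Pi.zero_apply] at hi hj
    rw [← sub_eq_zero.mpr (hi.trans hj.symm), ← Finset.sum_sub_distrib]
    simp only [PiLp.inner_apply, PiLp.sub_apply]
    refine Finset.sum_congr rfl fun a _ => ?_
    simp
    ring
  have htop : vectorSpan ℝ (Set.range v) = ⊤ :=
    hai.vectorSpan_eq_top_of_card_eq_finrank_add_one (by simp)
  have hle : vectorSpan ℝ (Set.range v) ≤ (ℝ ∙ (WithLp.toLp 2 x : Euc d))ᗮ := by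
    rw [vectorSpan_def, Submodule.span_le]
    rintro _ ⟨_, ⟨i, rfl⟩, _, ⟨j, rfl⟩, rfl⟩
    exact Submodule.mem_orthogonal_singleton_iff_inner_right.mpr (horth i j)
  have hmem : (WithLp.toLp 2 x : Euc d) ∈ (ℝ ∙ (WithLp.toLp 2 x : Euc d))ᗮ :=
    hle (htop ▸ Submodule.mem_top)
  have h0 := inner_self_eq_zero.mp (Submodule.mem_orthogonal_singleton_iff_inner_right.mp hmem)
  simpa using h0

theorem trace_centeredMatrix_mul_transpose_le {d : ℕ} {v : Fin (d + 1) → Euc d}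
    (hnorm : ∀ i, ‖v i‖ = 1) :
    (centeredMatrix v * (centeredMatrix v)ᵀ).trace ≤ d + 1 := by
  have hk : (0 : ℝ) < d + 1 := by positivity
  calc (centeredMatrix v * (centeredMatrix v)ᵀ).trace
      = ∑ a, ∑ i, (v i a - (∑ j, v j a) / (d + 1)) ^ 2 := by
        simp [Matrix.trace, Matrix.mul_apply, centeredMatrix, sq]
    _ ≤ ∑ a, ∑ i, v i a ^ 2 := by
        refine Finset.sum_le_sum fun a _ => ?_
        have : ∑ i, (v i a - (∑ j, v j a) / (d + 1)) ^ 2 =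
            ∑ i, v i a ^ 2 - (∑ j, v j a) ^ 2 / (d + 1) := by
          simp only [sub_sq, Finset.sum_add_distrib, Finset.sum_sub_distrib, ← Finset.sum_mul,
            ← Finset.mul_sum, Finset.sum_const, Finset.card_univ, Fintype.card_fin, nsmul_eq_mul]
          push_cast
          field_simp
          ring
        rw [this]
        exact sub_le_self _ (by positivity)
    _ = ∑ i, ‖v i‖ ^ 2 := by
        rw [Finset.sum_comm]
        simp [EuclideanSpace.norm_sq_eq]
    _ = d + 1 := by simp [hnorm]

/-- Squared distances between the points are read off from the Gram matrix of the centered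
points. -/
theorem dist_sq_eq_centeredMatrix {d : ℕ} (v : Fin (d + 1) → Euc d) (i j : Fin (d + 1)) :
    dist (v i) (v j) ^ 2 =
      ((centeredMatrix v)ᵀ * centeredMatrix v) i i + ((centeredMatrix v)ᵀ * centeredMatrix v) j j -
        2 * ((centeredMatrix v)ᵀ * centeredMatrix v) i j := by
  rw [dist_eq_norm, EuclideanSpace.norm_sq_eq]
  simp only [Matrix.mul_apply, Matrix.transpose_apply, centeredMatrix, Matrix.of_apply,
    Finset.mul_sum, ← Finset.sum_add_distrib, ← Finset.sum_sub_distrib, PiLp.sub_apply,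
    Real.norm_eq_abs, sq_abs]
  refine Finset.sum_congr rfl fun a _ => ?_
  ring

theorem stmt_10 {d : ℕ} (hd : 1 ≤ d) (v : Fin (d + 1) → Euc d)
    (hai : AffineIndependent ℝ v) (hnorm : ∀ i, ‖v i‖ = 1)
    (S : Set (Euc d)) (hS : S = Set.range v)
    (hirr : ¬ ∃ δ : ℝ, ∀ a ∈ S, ∀ b ∈ S, a ≠ b → dist a b = δ) :
    ∃ E : Set (Euc d), IsEllipsoid E ∧ S ⊆ E ∧
      volume E < volume (closedBall (0 : Euc d) 1) := by
  subst hS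
  set W := centeredMatrix v with hW
  have hd0 : (0 : ℝ) < d := by exact_mod_cast hd
  have hd1 : (0 : ℝ) < d + 1 := by positivity
  set c : ℝ := d / (d + 1) with hc
  have hc0 : 0 < c := by positivity
  have hH := posDef_centeredMatrix_mul_transpose hai
  rw [← hW] at hH
  have hproj : Wᵀ * (W * Wᵀ)⁻¹ * W = 1 - ((d + 1 : ℝ)⁻¹) • Matrix.of fun _ _ => 1 := by
    simpa using Matrix.transpose_mul_inv_mul_eq_one_sub (by simp) W hH.det_pos.ne'.isUnit
      (sum_centeredMatrix v)
  have hM : (c • (W * Wᵀ)).PosDef := hH.smul hc0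
  have hMne : c • (W * Wᵀ) ≠ 1 := by
    intro h1
    have hH1 : (W * Wᵀ)⁻¹ = c • (1 : Matrix (Fin d) (Fin d) ℝ) :=
      Matrix.inv_eq_left_inv (by rw [Matrix.smul_mul, Matrix.one_mul, h1])
    rw [hH1, Matrix.mul_smul, Matrix.mul_one, Matrix.smul_mul] at hproj
    have hG : ∀ i j, (Wᵀ * W) i j = c⁻¹ * ((1 : Matrix _ _ ℝ) i j - (d + 1 : ℝ)⁻¹) := by
      intro i j
      have := congrFun (congrFun hproj i) j
      simp only [Matrix.smul_apply, Matrix.sub_apply, Matrix.of_apply, smul_eq_mul,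
        mul_one] at this
      rw [← this, inv_mul_cancel_left₀ hc0.ne']
    refine hirr ⟨√(2 * c⁻¹), ?_⟩
    rintro _ ⟨i, rfl⟩ _ ⟨j, rfl⟩ hij
    have hij' : i ≠ j := fun h => hij (h ▸ rfl)
    rw [← Real.sqrt_sq (dist_nonneg (x := v i) (y := v j)), dist_sq_eq_centeredMatrix, ← hW,
      hG, hG, hG, Matrix.one_apply_eq, Matrix.one_apply_eq, Matrix.one_apply_ne hij']
    ring_nf
  have htr : (c • (W * Wᵀ)).trace ≤ Fintype.card (Fin d) := by
    rw [Matrix.trace_smul, smul_eq_mul, Fintype.card_fin]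
    calc c * (W * Wᵀ).trace ≤ c * (d + 1) :=
          mul_le_mul_of_nonneg_left (trace_centeredMatrix_mul_transpose_le hnorm) hc0.le
      _ = d := div_mul_cancel₀ _ hd1.ne'
  have hdetM := hM.det_lt_one_of_trace_le htr hMne
  obtain ⟨B, hB⟩ := hM.posSemidef.exists_eq_transpose_mul_self
  have hdet : (c • (W * Wᵀ)).det = Bᵀ.det ^ 2 := by
    rw [hB, Matrix.det_mul, Matrix.det_transpose, sq]
  have hBt0 : Bᵀ.det ≠ 0 := by
    intro h
    have := hM.det_pos
    rw [hdet, h] at this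
    norm_num at this
  have hBt1 : |Bᵀ.det| < 1 := by
    rw [← sq_lt_one_iff_abs_lt_one, ← hdet]
    exact hdetM
  let b : Euc d := WithLp.toLp 2 fun a => (∑ j, v j a) / (d + 1)
  obtain ⟨hE, hvol⟩ := isEllipsoid_and_volume_lt_of_abs_det_lt_one Bᵀ b hBt0 hBt1
  refine ⟨_, hE, ?_, hvol⟩
  have hUnit : IsUnit Bᵀ.det := hBt0.isUnit
  have hBinv : B⁻¹ * Bᵀ⁻¹ = c⁻¹ • (W * Wᵀ)⁻¹ := by
    rw [← Matrix.mul_inv_rev, ← hB]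
    refine Matrix.inv_eq_left_inv ?_
    rw [Matrix.smul_mul, Matrix.mul_smul, smul_smul, inv_mul_cancel₀ hc0.ne', one_smul,
      Matrix.nonsing_inv_mul _ hH.det_pos.ne'.isUnit]
  have hcol : (Bᵀ⁻¹ * W)ᵀ * (Bᵀ⁻¹ * W) = c⁻¹ • (Wᵀ * (W * Wᵀ)⁻¹ * W) := by
    rw [Matrix.transpose_mul, Matrix.transpose_nonsing_inv, Matrix.transpose_transpose,
      Matrix.mul_assoc, ← Matrix.mul_assoc B⁻¹, hBinv, Matrix.smul_mul, Matrix.mul_smul,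
      Matrix.mul_assoc]
  rintro _ ⟨i, rfl⟩
  refine ⟨WithLp.toLp 2 fun a => (Bᵀ⁻¹ * W) a i, ?_, ?_⟩
  · rw [mem_closedBall_zero_iff, ← sq_le_one_iff₀ (norm_nonneg _), EuclideanSpace.norm_sq_eq]
    have hii := congrFun (congrFun hcol i) i
    rw [hproj, Matrix.mul_apply] at hii
    simp only [Matrix.transpose_apply, Matrix.smul_apply, Matrix.sub_apply, Matrix.one_apply_eq,
      Matrix.of_apply, smul_eq_mul, mul_one] at hii
    have hval : c⁻¹ * (1 - (d + 1 : ℝ)⁻¹) = 1 := by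
      rw [hc]
      field_simp
      ring
    simp only [Real.norm_eq_abs, sq_abs]
    simp only [sq]
    rw [hii, hval]
  · have hmul : Bᵀ *ᵥ (fun a => (Bᵀ⁻¹ * W) a i) = fun a => W a i := by
      have : Bᵀ * (Bᵀ⁻¹ * W) = W := Matrix.mul_nonsing_inv_cancel_left _ _ hUnit
      funext a
      exact congrFun (congrFun this a) i
    ext a
    have ha := congrFun hmul a
    have hWa : W a i = v i a - (∑ j, v j a) / (d + 1) := rfl
    simp only [PiLp.add_apply, Matrix.toLpLin_toLp, Matrix.toLin'_apply, ha, hWa, b]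
    ring
end
end

section
/- Let u ∈ ℝ^ℓ be a unit vector and let 𝕊 = {a ∈ ℝ^ℓ : ⟨u, a⟩ = 1 and ‖a − u‖ ≤ 1} be the unit ball of the hyperplane ⟨u, ·⟩ = 1 centered at u. Let D be a real n × ℓ matrix, set t = D u, T = D(I − u uᵀ), and Q = T Tᵀ, and let P be an n × n real matrix satisfying the Penrose conditions Q P Q = Q, P Q P = P, (Q P)ᵀ = Q P, and (P Q)ᵀ = P Q (so that P is the Moore–Penrose pseudoinverse Q⁺ of Q). Then the image of 𝕊 under D is exactly D(𝕊) = {p ∈ ℝⁿ : (I − Q P)(p − t) = 0 and (p − t)ᵀ P (p − t) ≤ 1}. -/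
open Matrix

noncomputable section

/-- If `P` is an inner inverse of `T * Tᵀ`, then `T * Tᵀ * P` fixes the columns of `T`. -/
theorem mul_transpose_mul_mul_eq_self {m k : Type*} [Fintype m] [Fintype k] [DecidableEq m]
    {T : Matrix m k ℝ} {P : Matrix m m ℝ} (h : T * Tᵀ * P * (T * Tᵀ) = T * Tᵀ) :
    T * Tᵀ * P * T = T := by
  have h0 : (1 - T * Tᵀ * P) * (T * Tᴴ) = 0 := by
    rw [conjTranspose_eq_transpose_of_trivial, Matrix.sub_mul, h, Matrix.one_mul, sub_self]
  rw [mul_self_mul_conjTranspose_eq_zero, Matrix.sub_mul, Matrix.one_mul, sub_eq_zero] at h0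
  exact h0.symm

/-- For `q` fixed by `T * Tᵀ * P`, the vector `Tᵀ P q` is a preimage of `q` under `T`. -/
theorem mulVec_transpose_mulVec_mulVec {m k : Type*} [Fintype m] [Fintype k] [DecidableEq m]
    {T : Matrix m k ℝ} {P : Matrix m m ℝ} {q : m → ℝ} (hq : (1 - T * Tᵀ * P) *ᵥ q = 0) :
    T *ᵥ (Tᵀ *ᵥ (P *ᵥ q)) = q := by
  rw [sub_mulVec, one_mulVec, sub_eq_zero] at hq
  rw [mulVec_mulVec, mulVec_mulVec, ← hq]

theorem transpose_mulVec_mulVec_dotProduct {m k : Type*} [Fintype m] [Fintype k]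
    (T : Matrix m k ℝ) (P : Matrix m m ℝ) (q : m → ℝ) (y : k → ℝ) :
    (Tᵀ *ᵥ (P *ᵥ q)) ⬝ᵥ y = (T *ᵥ y) ⬝ᵥ P *ᵥ q := by
  rw [mulVec_transpose, ← dotProduct_mulVec, dotProduct_comm]

/-- The image under `T` of the unit ball of the orthogonal complement of a vector `u` in the kernel
of `T`, in terms of an inner inverse `P` of `T * Tᵀ`. -/
theorem exists_dotProduct_self_le_one_and_mulVec_eq_iff {m k : Type*} [Fintype m] [Fintype k]
    [DecidableEq m] {T : Matrix m k ℝ} {P : Matrix m m ℝ}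
    (h : T * Tᵀ * P * (T * Tᵀ) = T * Tᵀ) {u : k → ℝ} (hTu : T *ᵥ u = 0) (q : m → ℝ) :
    (∃ y, u ⬝ᵥ y = 0 ∧ y ⬝ᵥ y ≤ 1 ∧ T *ᵥ y = q) ↔
      (1 - T * Tᵀ * P) *ᵥ q = 0 ∧ q ⬝ᵥ P *ᵥ q ≤ 1 := by
  constructor
  · rintro ⟨y, -, hy, rfl⟩
    have hq : (1 - T * Tᵀ * P) *ᵥ (T *ᵥ y) = 0 := by
      rw [mulVec_mulVec, Matrix.sub_mul, Matrix.one_mul, mul_transpose_mul_mul_eq_self h,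
        sub_self, zero_mulVec]
    refine ⟨hq, ?_⟩
    have hw := mulVec_transpose_mulVec_mulVec hq
    have hwy := transpose_mulVec_mulVec_dotProduct T P (T *ᵥ y) y
    have hww := transpose_mulVec_mulVec_dotProduct T P (T *ᵥ y) (Tᵀ *ᵥ (P *ᵥ (T *ᵥ y)))
    rw [hw] at hww
    generalize Tᵀ *ᵥ (P *ᵥ (T *ᵥ y)) = w at hwy hww
    have hnonneg : 0 ≤ (y - w) ⬝ᵥ (y - w) :=
      Finset.sum_nonneg fun i _ => mul_self_nonneg _
    rw [sub_dotProduct, dotProduct_sub, dotProduct_sub, dotProduct_comm y w] at hnonneg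
    linarith
  · rintro ⟨hq, hle⟩
    have hw := mulVec_transpose_mulVec_mulVec hq
    refine ⟨Tᵀ *ᵥ (P *ᵥ q), ?_, ?_, hw⟩
    · rw [dotProduct_comm, transpose_mulVec_mulVec_dotProduct, hTu, zero_dotProduct]
    · rwa [transpose_mulVec_mulVec_dotProduct, hw]

theorem stmt_16 {ℓ n : ℕ} (u : Fin ℓ → ℝ) (hu : u ⬝ᵥ u = 1)
    (𝕊 : Set (Fin ℓ → ℝ)) (h𝕊 : 𝕊 = {a | u ⬝ᵥ a = 1 ∧ (a - u) ⬝ᵥ (a - u) ≤ 1})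
    (D : Matrix (Fin n) (Fin ℓ) ℝ)
    (t : Fin n → ℝ) (ht : t = D.mulVec u)
    (T : Matrix (Fin n) (Fin ℓ) ℝ) (hT : T = D * (1 - Matrix.vecMulVec u u))
    (Q : Matrix (Fin n) (Fin n) ℝ) (hQ : Q = T * T.transpose)
    (P : Matrix (Fin n) (Fin n) ℝ)
    (hP1 : Q * P * Q = Q) (hP2 : P * Q * P = P)
    (hP3 : (Q * P).transpose = Q * P) (hP4 : (P * Q).transpose = P * Q) :
    (fun a => D.mulVec a) '' 𝕊 =
      {p : Fin n → ℝ | (1 - Q * P).mulVec (p - t) = 0 ∧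
        (p - t) ⬝ᵥ P.mulVec (p - t) ≤ 1} := by
  have hTv (y : Fin ℓ → ℝ) : T *ᵥ y = D *ᵥ (y - (u ⬝ᵥ y) • u) := by
    rw [hT, ← mulVec_mulVec, sub_mulVec, one_mulVec, vecMulVec_mulVec, op_smul_eq_smul]
  have hTu : T *ᵥ u = 0 := by rw [hTv, hu, one_smul, sub_self, mulVec_zero]
  have hTD {y : Fin ℓ → ℝ} (hy : u ⬝ᵥ y = 0) : T *ᵥ y = D *ᵥ y := by
    rw [hTv, hy, zero_smul, sub_zero]
  subst hQ h𝕊 ht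
  ext p
  rw [Set.mem_ofPred_eq, ← exists_dotProduct_self_le_one_and_mulVec_eq_iff hP1 hTu]
  constructor
  · rintro ⟨a, ⟨ha, hle⟩, rfl⟩
    have hy : u ⬝ᵥ (a - u) = 0 := by rw [dotProduct_sub, ha, hu, sub_self]
    exact ⟨a - u, hy, hle, by rw [hTD hy, mulVec_sub]⟩
  · rintro ⟨y, hy, hle, hyp⟩
    refine ⟨u + y, ⟨?_, ?_⟩, ?_⟩
    · rw [dotProduct_add, hu, hy, add_zero]
    · rwa [add_sub_cancel_left]
    · rw [hTD hy] at hyp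
      beta_reduce
      rw [mulVec_add, hyp, add_sub_cancel]
end
end
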